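/- Let $K$ be an algebraically closed field and let $\Gamma$ be a Brauer tree of multiplicity one, i.e. a finite tree with a cyclic ordering of the edges around each vertex. Its Brauer quiver $Q$ has the edges of $\Gamma$ as vertices and, for each vertex $p$ of $\Gamma$ and each edge $i$ at $p$, an arrow from $i$ to the edge following $i$ in the cyclic order at $p$ (a loop if $p$ is a leaf). Let $A = KQ/I$ be the basic Brauer tree algebra ($ab$ denotes the path $a$ followed by $b$), where $I$ is generated by the products $ab$ of arrows belonging to different vertices of $\Gamma$ and, for each vertex $i$ of $Q$, by the difference of the two full cycles at $i$ belonging to the two ends of the edge $i$. An $A$-cycle is a maximal ordered set of nonrepeating arrows of $Q$ such that the product in $A$ of any two neighboring arrows is nonzero. Consider complexes $T = (P_0 \xrightarrow{f} P_1)$ of finitely generated projective left $A$-modules concentrated in degrees $0$ and $1$ that are indecomposable and partial tilting ($\mathrm{Hom}_{D^b(A)}(T,T[k])=0$ for all $k\neq 0$) and that are minimal projective presentations of indecomposable non-projective $A$-modules. The diagram of such a $T$ is the path in $Q$ (not necessarily directed) that is connected, has more than one vertex and no self-intersections, and changes its orientation exactly when it changes the $A$-cycle, such that $P_0 \cong \bigoplus_i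 Ae_i$ with $i$ running over the sources of the path, $P_1 \cong \bigoplus_j Ae_j$ with $j$ running over its sinks, and, for suitable such isomorphisms, the component $Ae_i \to Ae_j$ of $f$ is nonzero exactly when the path contains a directed subpath from $i$ to $j$. A source (sink) has degree one if it is an end point of the diagram. Let $T_i$ and $T_j$ be two such complexes, and suppose that their diagrams both have vertices belonging to an $A$-cycle $\Upsilon$ but have no vertex in common. Then $$\mathrm{Hom}_{D^b(A)}(T_i, T_j[-1]) = 0 = \mathrm{Hom}_{D^b(A)}(T_j, T_i[-1])$$ if and only if neither of the following two conditions holds: (1) $\Upsilon$ contains a degree-one source of $T_j$ and a degree-one sink of $T_i$, and these are the only vertices of the diagrams of $T_i$ and $T_j$ belonging to $\Upsilon$; (2) the same with the roles of $T_i$ and $T_j$ exchanged. -/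

import Mathlib

open CategoryTheory CategoryTheory.Limits

universe w u v

/-- A Brauer tree of multiplicity one: a tree with a cyclic ordering of the edges around each
vertex. An edge at the vertex `p` is encoded by the dart starting at `p`, and `next d` is the edge
that follows `d` in the cyclic order around `d.fst`. (For multiplicity one the exceptional vertex
plays no role.) -/
structure BrauerTree (V : Type v) where
  graph : SimpleGraph V
  isTree : graph.IsTree
  next : Equiv.Perm graph.Dart
  next_fst : ∀ d, (next d).fst = d.fst
  next_sameCycle : ∀ d d' : graph.Dart, d.fst = d'.fst → next.SameCycle d d'

namespace BrauerTree

variable {V : Type v} (Γ : BrauerTree V)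

/-- The vertices of the Brauer quiver: the edges of the tree. -/
abbrev QVertex : Type v := Γ.graph.edgeSet

/-- The arrows of the Brauer quiver, one for each incidence of an edge with a vertex `p` of the
tree: the dart `d` gives the arrow from the edge of `d` to the edge following it around `d.fst`.
(For a leaf this is a loop.) -/
abbrev Arrow : Type v := Γ.graph.Dart

variable {Γ}

/-- The source of an arrow of the Brauer quiver. -/
def src (a : Γ.Arrow) : Γ.QVertex := ⟨a.edge, a.edge_mem⟩

/-- The target of an arrow of the Brauer quiver. -/
def tgt (a : Γ.Arrow) : Γ.QVertex := src (Γ.next a)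

variable (Γ)

/-- Generators of the path algebra: trivial paths and arrows. -/
inductive Gen : Type v
  | idem (x : Γ.QVertex) : Gen
  | arrow (a : Γ.Arrow) : Gen

variable (K : Type u) [Field K]

/-- A trivial path in the free algebra. -/
def freeIdem (x : Γ.QVertex) : FreeAlgebra K Γ.Gen := FreeAlgebra.ι K (Gen.idem x)

/-- An arrow in the free algebra. -/
def freeArrow (a : Γ.Arrow) : FreeAlgebra K Γ.Gen := FreeAlgebra.ι K (Gen.arrow a)

/-- The product of the arrows met when running once around the cycle of `a`, starting with `a`. -/
noncomputable def freeCycle (a : Γ.Arrow) : FreeAlgebra K Γ.Gen :=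
  ((List.range (Function.minimalPeriod Γ.next a)).map
    fun k => Γ.freeArrow K ((Γ.next ^ k) a)).prod

/-- The defining relations of the basic Brauer tree algebra. The first five present the path
algebra of the Brauer quiver (where `a * b` means first `a`, then `b`); the last two generate the
ideal: the product of two arrows from different cycles is zero, and the two full cycles through a
vertex (those of `a` and `a.symm`, for `a` starting there) are equal. -/
inductive Rel : FreeAlgebra K Γ.Gen → FreeAlgebra K Γ.Gen → Prop
  | idem_mul_self (x : Γ.QVertex) :
      Rel (Γ.freeIdem K x * Γ.freeIdem K x) (Γ.freeIdem K x)
  | idem_mul_idem (x y : Γ.QVertex) (h : x ≠ y) :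
      Rel (Γ.freeIdem K x * Γ.freeIdem K y) 0
  | sum_idem : Rel (∑ᶠ x : Γ.QVertex, Γ.freeIdem K x) 1
  | src_mul (a : Γ.Arrow) : Rel (Γ.freeIdem K (src a) * Γ.freeArrow K a) (Γ.freeArrow K a)
  | mul_tgt (a : Γ.Arrow) : Rel (Γ.freeArrow K a * Γ.freeIdem K (tgt a)) (Γ.freeArrow K a)
  | arrow_mul_arrow (a b : Γ.Arrow) (h : a.fst ≠ b.fst) :
      Rel (Γ.freeArrow K a * Γ.freeArrow K b) 0
  | cycle_eq (a : Γ.Arrow) : Rel (Γ.freeCycle K a) (Γ.freeCycle K a.symm)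

/-- The basic Brauer tree algebra of `Γ` over `K`, with multiplicity one. -/
def Alg : Type (max u v) := RingQuot (Γ.Rel K)

noncomputable instance : Ring (Γ.Alg K) := inferInstanceAs (Ring (RingQuot (Γ.Rel K)))

noncomputable instance : Algebra K (Γ.Alg K) :=
  inferInstanceAs (Algebra K (RingQuot (Γ.Rel K)))

/-- The primitive idempotent of a vertex of the Brauer quiver. -/
noncomputable def idem (x : Γ.QVertex) : Γ.Alg K :=
  RingQuot.mkAlgHom K (Γ.Rel K) (Γ.freeIdem K x)

/-- The image of an arrow in the Brauer tree algebra. -/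
noncomputable def arrow (a : Γ.Arrow) : Γ.Alg K :=
  RingQuot.mkAlgHom K (Γ.Rel K) (Γ.freeArrow K a)

/-- The indecomposable projective left module `A e_x`. -/
noncomputable def proj (x : Γ.QVertex) : ModuleCat.{max u v} (Γ.Alg K) :=
  ModuleCat.of (Γ.Alg K) (Ideal.span {Γ.idem K x} : Ideal (Γ.Alg K))

/-- An ordered set of nonrepeating arrows in which neighboring arrows have nonzero product. -/
def IsNonzeroChain (c : List Γ.Arrow) : Prop :=
  c.Nodup ∧ c.IsChain fun a b => Γ.arrow K a * Γ.arrow K b ≠ 0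

/-- An `A`-cycle: a maximal ordered set of nonrepeating arrows in which neighboring arrows have
nonzero product. -/
def IsACycle (c : List Γ.Arrow) : Prop :=
  Γ.IsNonzeroChain K c ∧ ∀ c', Γ.IsNonzeroChain K c' → c.Sublist c' → c' = c

variable {Γ} in
/-- The vertex `x` of the quiver belongs to the given `A`-cycle. -/
def OnCycle (c : List Γ.Arrow) (x : Γ.QVertex) : Prop :=
  ∃ a ∈ c, src a = x ∨ tgt a = x

/-- Two arrows lie on a common `A`-cycle. -/
def SameACycle (a b : Γ.Arrow) : Prop :=
  ∃ c, Γ.IsACycle K c ∧ a ∈ c ∧ b ∈ c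

/-- A step of an undirected path on the quiver: an arrow, traversed along its direction (`true`)
or against it (`false`). -/
abbrev Step : Type v := Γ.Arrow × Bool

variable {Γ}

/-- The vertex at which a step starts. -/
def Step.start (s : Γ.Step) : Γ.QVertex := if s.2 then src s.1 else tgt s.1

/-- The vertex at which a step ends. -/
def Step.finish (s : Γ.Step) : Γ.QVertex := if s.2 then tgt s.1 else src s.1

/-- The vertices visited by a sequence of steps, in order. -/
def stepVertices : List Γ.Step → List Γ.QVertex
  | [] => []
  | s :: l => Step.start s :: (s :: l).map Step.finish

variable (Γ)

/-- A diagram on the quiver: a connected path without self-intersections, consisting of more than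
one vertex, which changes its orientation exactly when it changes the `A`-cycle. -/
structure Diagram where
  steps : List Γ.Step
  steps_ne_nil : steps ≠ []
  connected : steps.IsChain fun s t => Step.finish s = Step.start t
  nodup : (stepVertices steps).Nodup
  turns : steps.IsChain fun s t => s.2 ≠ t.2 ↔ ¬ Γ.SameACycle K s.1 t.1

namespace Diagram

variable {Γ K} (Θ : Γ.Diagram K)

/-- The vertices of the diagram, in order. -/
def vertices : List Γ.QVertex := stepVertices Θ.steps

/-- The arrows of the diagram. -/
def arrows : List Γ.Arrow := Θ.steps.map Prod.fst

/-- A source of the diagram: no arrow of the diagram ends there. -/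
def IsSource (x : Γ.QVertex) : Prop := x ∈ Θ.vertices ∧ ∀ a ∈ Θ.arrows, tgt a ≠ x

/-- A sink of the diagram: no arrow of the diagram starts there. -/
def IsSink (x : Γ.QVertex) : Prop := x ∈ Θ.vertices ∧ ∀ a ∈ Θ.arrows, src a ≠ x

/-- An end point of the diagram. -/
def IsEndpoint (x : Γ.QVertex) : Prop :=
  Θ.vertices.head? = some x ∨ Θ.vertices.getLast? = some x

/-- A degree-one source: a source that is an end point of the diagram. -/
def IsDegreeOneSource (x : Γ.QVertex) : Prop := Θ.IsSource x ∧ Θ.IsEndpoint x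

/-- A degree-one sink: a sink that is an end point of the diagram. -/
def IsDegreeOneSink (x : Γ.QVertex) : Prop := Θ.IsSink x ∧ Θ.IsEndpoint x

/-- The diagram contains a directed path of the quiver from `x` to `y`. -/
def HasDirectedPath (x y : Γ.QVertex) : Prop :=
  Relation.TransGen (fun p q => ∃ a ∈ Θ.arrows, src a = p ∧ tgt a = q) x y

instance : Finite {x // Θ.IsSource x} :=
  Set.Finite.subset (List.finite_toSet Θ.vertices) fun _ h => h.1

instance : Finite {x // Θ.IsSink x} :=
  Set.Finite.subset (List.finite_toSet Θ.vertices) fun _ h => h.1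

/-- `Θ` is the diagram of the two-term complex `T`: the sources of `Θ` index the summands `A e_i`
of `T⁰`, the sinks of `Θ` index the summands `A e_j` of `T¹`, and the component `A e_i ⟶ A e_j` of
the differential is nonzero exactly when the directed path from `i` to `j` is part of `Θ`. -/
def IsDiagramOf (T : CochainComplex (ModuleCat.{max u v} (Γ.Alg K)) ℤ) : Prop :=
  ∃ (φ₀ : T.X 0 ≅ ⨁ fun i : {x // Θ.IsSource x} => Γ.proj K i.1)
    (φ₁ : T.X 1 ≅ ⨁ fun j : {x // Θ.IsSink x} => Γ.proj K j.1),
    ∀ (i : {x // Θ.IsSource x}) (j : {x // Θ.IsSink x}),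
      biproduct.ι (fun i : {x // Θ.IsSource x} => Γ.proj K i.1) i ≫ φ₀.inv ≫ T.d 0 1 ≫ φ₁.hom ≫
        biproduct.π (fun j : {x // Θ.IsSink x} => Γ.proj K j.1) j ≠ 0 ↔
      Θ.HasDirectedPath i.1 j.1

/-- `c` contains a degree-one source of `Θ'` and a degree-one sink of `Θ`, and these are the only
vertices of `Θ` and `Θ'` belonging to `c`. -/
def SinkSourceOn (Θ Θ' : Γ.Diagram K) (c : List Γ.Arrow) : Prop :=
  ∃ s t, Θ'.IsDegreeOneSource s ∧ OnCycle c s ∧ Θ.IsDegreeOneSink t ∧ OnCycle c t ∧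
    (∀ x ∈ Θ'.vertices, OnCycle c x → x = s) ∧ (∀ x ∈ Θ.vertices, OnCycle c x → x = t)

end Diagram

end BrauerTree

section Complexes

variable {A : Type u} [Ring A]

/-- A submodule `N` of `M` is superfluous if `N + L = M` only for `L = M`. -/
def IsSuperfluous {M : Type v} [AddCommGroup M] [Module A M] (N : Submodule A M) : Prop :=
  ∀ L : Submodule A M, N ⊔ L = ⊤ → L = ⊤

/-- `T⁰ ⟶ T¹` is a minimal projective presentation of `M`: it is followed by a surjection
`T¹ ⟶ M` with kernel the image of `T⁰`, where `T⁰` and `T¹` are projective and `T¹ ⟶ M` and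
`T⁰ ⟶ ker (T¹ ⟶ M)` have superfluous kernels (i.e. are projective covers). -/
def IsMinimalProjectivePresentation (T : CochainComplex (ModuleCat.{u} A) ℤ) (M : ModuleCat.{u} A) :
    Prop :=
  Module.Projective A (T.X 0) ∧ Module.Projective A (T.X 1) ∧
    ∃ π : T.X 1 ⟶ M, Function.Surjective π ∧ Function.Exact (T.d 0 1) π ∧
      IsSuperfluous (LinearMap.ker π.hom) ∧ IsSuperfluous (LinearMap.ker (T.d 0 1).hom)

/-- `T` is, as a complex in degrees `0` and `1`, the minimal projective presentation of an
indecomposable non-projective module. -/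
def IsPresentationOfModule (T : CochainComplex (ModuleCat.{u} A) ℤ) : Prop :=
  ∃ M : ModuleCat.{u} A, Indecomposable M ∧ ¬ Module.Projective A M ∧
    IsMinimalProjectivePresentation T M

/-- `Hom(S, T[k]) = 0` in the derived category. Complexes of modules are identified with their
images in the derived category; the bounded derived category is a full subcategory of it. -/
def DerivedHomVanishes [HasDerivedCategory.{w} (ModuleCat.{u} A)]
    (S T : CochainComplex (ModuleCat.{u} A) ℤ) (k : ℤ) : Prop :=
  ∀ f : DerivedCategory.Q.obj S ⟶ (DerivedCategory.Q.obj T)⟦k⟧, f = 0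

/-- `T` is an indecomposable two-term partial tilting complex: a complex of finitely generated
projective modules concentrated in degrees `0` and `1`, indecomposable in the derived category,
with `Hom(T, T[k]) = 0` for all `k ≠ 0`. -/
structure IsIndecTwoTermPartialTilting [HasDerivedCategory.{w} (ModuleCat.{u} A)]
    (T : CochainComplex (ModuleCat.{u} A) ℤ) : Prop where
  twoTerm : ∀ n : ℤ, n ≠ 0 → n ≠ 1 → IsZero (T.X n)
  finite : ∀ n : ℤ, Module.Finite A (T.X n)
  projective : ∀ n : ℤ, Module.Projective A (T.X n)
  indecomposable : Indecomposable (DerivedCategory.Q.obj T)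
  hom_vanishes : ∀ k : ℤ, k ≠ 0 → DerivedHomVanishes T T k

end Complexes

/-
A morphism `T ⟶ T'[-1]` in the derived category is a map `g : T.X 1 ⟶ T'.X 0` annihilated by both
differentials, that is, a matrix with entries in the Peirce components `e_t A e_s` for the sinks `t`
of one diagram and the sources `s` of the other. For `t ≠ s` such a component is zero unless the
edges `t` and `s` of the tree share a vertex `p`, and then it is spanned by the path from `t` to `s`
around `p`. Since the tree has no cycles, disjoint diagrams share at most one vertex `p` of the
tree, so all nonzero entries of `g` belong to the same cycle of the quiver. If an arrow of this
cycle lying in the first diagram ended at a sink `t` with `g t s ≠ 0`, it would be the last arrow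
of a directed subpath whose composite with the path from `t` to `s` is shorter than the full cycle,
hence nonzero, although `d ≫ g = 0`. So `t` is an end point and the only vertex of its diagram at
`p`, and dually for `s`. Conversely, under these conditions every composite of the path from `t` to
`s` with a component of a differential changes cycle and vanishes.
-/

section DerivedHom

open CochainComplex CochainComplex.HomComplex

variable {C : Type u} [Category.{v} C]

section Preadditive

variable [Preadditive C] {S T : CochainComplex C ℤ} {n m k : ℤ}

theorem cochain_eq_zero_of_lt [S.IsStrictlyLE n] [T.IsStrictlyGE m] (h : n + k < m)
    (z : Cochain S T k) : z = 0 := by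
  ext p q hpq
  by_cases hp : n < p
  · exact (isZero_of_isStrictlyLE S n p hp).eq_of_src _ _
  · exact (isZero_of_isStrictlyGE T m q (by lia)).eq_of_tgt _ _

theorem cochain_eq_single [S.IsStrictlyLE n] [T.IsStrictlyGE m] (h : n + k = m)
    (z : Cochain S T k) : z = Cochain.single (z.v n m h) k := by
  ext p q hpq
  rcases lt_trichotomy n p with hp | rfl | hp
  · exact (isZero_of_isStrictlyLE S n p hp).eq_of_src _ _
  · obtain rfl : q = m := by lia
    rw [Cochain.single_v]
  · exact (isZero_of_isStrictlyGE T m q (by lia)).eq_of_tgt _ _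

theorem cochain_δ_eq_zero_iff [S.IsStrictlyLE n] [T.IsStrictlyGE m] (h : n + k = m)
    (z : Cochain S T k) :
    δ k (k + 1) z = 0 ↔ S.d (n - 1) n ≫ z.v n m h = 0 ∧ z.v n m h ≫ T.d m (m + 1) = 0 := by
  have hδ := Cochain.δ_single (z.v n m h) k (k + 1) rfl (n - 1) (m + 1) (by lia) rfl
  rw [← cochain_eq_single h z] at hδ
  constructor
  · intro h0
    have h₁ := congrArg (fun y => y.v (n - 1) m (by lia)) h0
    have h₂ := congrArg (fun y => y.v n (m + 1) (by lia)) h0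
    rw [hδ] at h₁ h₂
    simpa [smul_eq_zero_iff_eq, Cochain.single_v_eq_zero _ _ n _ _ (show n ≠ n - 1 by lia),
      Cochain.single_v_eq_zero _ _ (n - 1) _ _ (show n - 1 ≠ n by lia)] using And.intro h₁ h₂
  · rintro ⟨h₁, h₂⟩
    rw [hδ, h₁, h₂, Cochain.single_zero, Cochain.single_zero, smul_zero, add_zero]

theorem forall_cocycle_eq_zero_iff [S.IsStrictlyLE n] [T.IsStrictlyGE m] (h : n + k = m) :
    (∀ z : Cocycle S T k, z = 0) ↔
      ∀ g : S.X n ⟶ T.X m, S.d (n - 1) n ≫ g = 0 → g ≫ T.d m (m + 1) = 0 → g = 0 := by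
  constructor
  · intro hz g h₁ h₂
    have hg := (cochain_δ_eq_zero_iff h (Cochain.single g k)).2
      (by rw [Cochain.single_v]; exact ⟨h₁, h₂⟩)
    have h0 := congrArg (fun z => z.1.v n m h) (hz (Cocycle.mk _ (k + 1) rfl hg))
    simpa using h0
  · intro hg z
    obtain ⟨h₁, h₂⟩ := (cochain_δ_eq_zero_iff h z.1).1 (z.δ_eq_zero (k + 1))
    ext1
    rw [cochain_eq_single h z.1, hg _ h₁ h₂, Cochain.single_zero]
    rfl

end Preadditive

variable [Abelian C] [HasDerivedCategory.{w} C] {S T : CochainComplex C ℤ} {n m k : ℤ}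

open DerivedCategory in
theorem forall_derivedHom_eq_zero_iff_cohomologyClass [S.IsKProjective] :
    (∀ f : Q.obj S ⟶ (Q.obj T)⟦k⟧, f = 0) ↔ ∀ z : CohomologyClass S T k, z = 0 := by
  let e : ((HomotopyCategory.quotient C _ ⋙ Qh).obj S ⟶
      (HomotopyCategory.quotient C _ ⋙ Qh).obj (T⟦k⟧)) ≃ (Q.obj S ⟶ (Q.obj T)⟦k⟧) :=
    Iso.homCongr ((quotientCompQhIso C).app S)
      ((quotientCompQhIso C).app (T⟦k⟧) ≪≫ (Q.commShiftIso k).app T)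
  have hbij := e.bijective.comp ((IsKProjective.Qh_map_bijective S _).comp
    (CohomologyClass.toHom_bijective S T k))
  rw [← subsingleton_iff_forall_eq, ← subsingleton_iff_forall_eq]
  exact (Equiv.ofBijective _ hbij).symm.subsingleton_congr

theorem forall_derivedHom_eq_zero_iff [S.IsStrictlyLE n] [T.IsStrictlyGE m]
    [∀ i, Projective (S.X i)] (h : n + k = m) :
    (∀ f : DerivedCategory.Q.obj S ⟶ (DerivedCategory.Q.obj T)⟦k⟧, f = 0) ↔
      ∀ g : S.X n ⟶ T.X m, S.d (n - 1) n ≫ g = 0 → g ≫ T.d m (m + 1) = 0 → g = 0 := by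
  have := isKProjective_of_projective S n
  rw [forall_derivedHom_eq_zero_iff_cohomologyClass, ← forall_cocycle_eq_zero_iff h,
    CohomologyClass.mk_surjective.forall]
  refine forall_congr' fun z => ?_
  rw [CohomologyClass.mk_eq_zero_iff, mem_coboundaries_iff z (k - 1) (by lia)]
  constructor
  · rintro ⟨y, hy⟩
    ext1
    rw [← hy, cochain_eq_zero_of_lt (show n + (k - 1) < m by lia) y, δ_zero]
    rfl
  · rintro rfl
    exact ⟨0, δ_zero _ _⟩

theorem derivedHomVanishes_neg_one_iff {A : Type u} [Ring A]
    [HasDerivedCategory.{w} (ModuleCat.{u} A)] {S T : CochainComplex (ModuleCat.{u} A) ℤ}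
    [S.IsStrictlyLE 1] [T.IsStrictlyGE 0] [∀ i, Projective (S.X i)] :
    DerivedHomVanishes S T (-1) ↔
      ∀ g : S.X 1 ⟶ T.X 0, S.d 0 1 ≫ g = 0 → g ≫ T.d 0 1 = 0 → g = 0 :=
  forall_derivedHom_eq_zero_iff (by norm_num)

end DerivedHom

namespace BrauerTree

variable {V : Type v} {Γ : BrauerTree V}

section Arrows

lemma next_pow_fst (a : Γ.Arrow) (k : ℕ) : ((Γ.next ^ k) a).fst = a.fst := by
  induction k with
  | zero => rfl
  | succ k ih => rw [pow_succ', Equiv.Perm.mul_apply, Γ.next_fst, ih]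

lemma next_pow_add_apply (a : Γ.Arrow) (k l : ℕ) :
    (Γ.next ^ (k + l)) a = (Γ.next ^ l) ((Γ.next ^ k) a) := by
  rw [add_comm, pow_add, Equiv.Perm.mul_apply]

lemma tgt_next_pow (a : Γ.Arrow) (k : ℕ) :
    tgt ((Γ.next ^ k) a) = src ((Γ.next ^ (k + 1)) a) := by
  rw [tgt, pow_succ', Equiv.Perm.mul_apply]

lemma fst_mem_src (a : Γ.Arrow) : a.fst ∈ (src a).1 := by
  simp [src, SimpleGraph.Dart.edge]

lemma fst_mem_tgt (a : Γ.Arrow) : a.fst ∈ (tgt a).1 :=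
  Γ.next_fst a ▸ fst_mem_src (Γ.next a)

lemma fst_mem_src_next_pow (a : Γ.Arrow) (k : ℕ) : a.fst ∈ (src ((Γ.next ^ k) a)).1 :=
  next_pow_fst a k ▸ fst_mem_src _

lemma src_symm (a : Γ.Arrow) : src a.symm = src a := by
  simp [src]

lemma arrow_eq_of_fst_src {a b : Γ.Arrow} (h : a.fst = b.fst) (h' : src a = src b) : a = b := by
  rcases (SimpleGraph.dart_edge_eq_iff a b).1 (congrArg Subtype.val h') with rfl | rfl
  · rfl
  · exact absurd h b.adj.ne'

lemma arrow_eq_of_fst_tgt {a b : Γ.Arrow} (h : a.fst = b.fst) (h' : tgt a = tgt b) : a = b :=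
  Γ.next.injective (arrow_eq_of_fst_src (by rwa [Γ.next_fst, Γ.next_fst]) h')

lemma exists_src_eq {x : Γ.QVertex} {p : V} (h : p ∈ x.1) :
    ∃ a : Γ.Arrow, a.fst = p ∧ src a = x := by
  obtain ⟨x, hx⟩ := x
  obtain ⟨q, rfl⟩ := Sym2.mem_iff_exists.1 h
  exact ⟨⟨(p, q), hx⟩, rfl, rfl⟩

lemma eq_of_mem_mem {x y : Γ.QVertex} (h : x ≠ y) {p q : V} (hpx : p ∈ x.1) (hpy : p ∈ y.1)
    (hqx : q ∈ x.1) (hqy : q ∈ y.1) : p = q := by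
  by_contra hpq
  exact h (Subtype.ext (((Sym2.mem_and_mem_iff hpq).1 ⟨hpx, hqx⟩).trans
    ((Sym2.mem_and_mem_iff hpq).1 ⟨hpy, hqy⟩).symm))

/-- The length of the cycle of the quiver through `a`, i.e. the number of edges of the tree at
`a.fst`. -/
noncomputable abbrev period (a : Γ.Arrow) : ℕ := Function.minimalPeriod Γ.next a

lemma next_pow_period (a : Γ.Arrow) : (Γ.next ^ period a) a = a := by
  rw [← Equiv.Perm.iterate_eq_pow]
  exact Function.iterate_minimalPeriod

lemma next_pow_inj {a : Γ.Arrow} {k l : ℕ} (hk : k < period a) (hl : l < period a)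
    (h : (Γ.next ^ k) a = (Γ.next ^ l) a) : k = l := by
  rw [← Equiv.Perm.iterate_eq_pow, ← Equiv.Perm.iterate_eq_pow] at h
  exact Function.iterate_injOn_Iio_minimalPeriod hk hl h

lemma src_next_pow_ne {a : Γ.Arrow} {k : ℕ} (hk : 0 < k) (hk' : k < period a) :
    src a ≠ src ((Γ.next ^ k) a) := fun h =>
  hk.ne (next_pow_inj (hk.trans hk') hk' (arrow_eq_of_fst_src (next_pow_fst a k).symm h))

variable [Finite V]

instance : Finite Γ.Arrow :=
  Finite.of_injective (fun a : Γ.Arrow => a.toProd) SimpleGraph.Dart.toProd_injective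

lemma period_pos (a : Γ.Arrow) : 0 < period a :=
  Function.minimalPeriod_pos_of_mem_periodicPts (Γ.next.injective.mem_periodicPts a)

lemma period_next_pow (a : Γ.Arrow) (k : ℕ) : period ((Γ.next ^ k) a) = period a := by
  rw [← Equiv.Perm.iterate_eq_pow]
  exact Function.minimalPeriod_apply_iterate (Γ.next.injective.mem_periodicPts a) k

lemma exists_next_pow_eq {a b : Γ.Arrow} (h : a.fst = b.fst) :
    ∃ k < period a, (Γ.next ^ k) a = b := by
  obtain ⟨n, hn⟩ := (Γ.next_sameCycle a b h).exists_nat_pow_eq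
  refine ⟨n % period a, Nat.mod_lt _ (period_pos a), ?_⟩
  rwa [← Equiv.Perm.iterate_eq_pow, Function.iterate_mod_minimalPeriod_eq,
    Equiv.Perm.iterate_eq_pow]

lemma exists_arc {x y : Γ.QVertex} (h : x ≠ y) {p : V} (hx : p ∈ x.1) (hy : p ∈ y.1) :
    ∃ (a : Γ.Arrow) (k : ℕ), a.fst = p ∧ 0 < k ∧ k < period a ∧ src a = x ∧
      src ((Γ.next ^ k) a) = y := by
  obtain ⟨a, rfl, rfl⟩ := exists_src_eq hx
  obtain ⟨b, hab, rfl⟩ := exists_src_eq hy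
  obtain ⟨k, hk, rfl⟩ := exists_next_pow_eq hab.symm
  have hk0 : k ≠ 0 := by
    rintro rfl
    exact h rfl
  exact ⟨a, k, rfl, Nat.pos_of_ne_zero hk0, hk, rfl, rfl⟩

end Arrows

section Algebra

variable {K : Type u} [Field K]

variable (Γ K) in
/-- The projection from the free algebra to the Brauer tree algebra. -/
noncomputable def toAlg : FreeAlgebra K Γ.Gen →ₐ[K] Γ.Alg K := RingQuot.mkAlgHom K (Γ.Rel K)

lemma toAlg_surjective : Function.Surjective (toAlg Γ K) :=
  RingQuot.mkAlgHom_surjective K (Γ.Rel K)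

lemma toAlg_rel {x y : FreeAlgebra K Γ.Gen} (h : Γ.Rel K x y) : toAlg Γ K x = toAlg Γ K y :=
  RingQuot.mkAlgHom_rel K h

lemma toAlg_freeIdem (x : Γ.QVertex) : toAlg Γ K (Γ.freeIdem K x) = Γ.idem K x := rfl

lemma toAlg_freeArrow (a : Γ.Arrow) : toAlg Γ K (Γ.freeArrow K a) = Γ.arrow K a := rfl

lemma idem_mul_self (x : Γ.QVertex) : Γ.idem K x * Γ.idem K x = Γ.idem K x := by
  simp only [← toAlg_freeIdem, ← map_mul]
  exact toAlg_rel (Rel.idem_mul_self x)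

lemma idem_mul_idem {x y : Γ.QVertex} (h : x ≠ y) : Γ.idem K x * Γ.idem K y = 0 := by
  simp only [← toAlg_freeIdem, ← map_mul]
  exact (toAlg_rel (Rel.idem_mul_idem x y h)).trans (map_zero _)

lemma idem_src_mul_arrow (a : Γ.Arrow) : Γ.idem K (src a) * Γ.arrow K a = Γ.arrow K a := by
  simp only [← toAlg_freeIdem, ← toAlg_freeArrow, ← map_mul]
  exact toAlg_rel (Rel.src_mul a)

lemma arrow_mul_idem_tgt (a : Γ.Arrow) : Γ.arrow K a * Γ.idem K (tgt a) = Γ.arrow K a := by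
  simp only [← toAlg_freeIdem, ← toAlg_freeArrow, ← map_mul]
  exact toAlg_rel (Rel.mul_tgt a)

lemma sum_idem [Fintype Γ.QVertex] : ∑ x : Γ.QVertex, Γ.idem K x = 1 := by
  have h := toAlg_rel (Rel.sum_idem (Γ := Γ) (K := K))
  rwa [finsum_eq_sum_of_fintype, map_sum, map_one] at h

lemma mul_eq_zero_of_mul_idem {x y : Γ.QVertex} {z w : Γ.Alg K} (hz : z * Γ.idem K x = z)
    (hw : Γ.idem K y * w = w) (h : x ≠ y) : z * w = 0 := by
  rw [← hz, ← hw, mul_assoc, ← mul_assoc (Γ.idem K x), idem_mul_idem h, zero_mul, mul_zero]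

lemma eq_next_of_arrow_mul_arrow_ne_zero {a b : Γ.Arrow} (h : Γ.arrow K a * Γ.arrow K b ≠ 0) :
    b = Γ.next a := by
  have hfst : a.fst = b.fst := by
    by_contra hfst
    apply h
    simp only [← toAlg_freeArrow, ← map_mul]
    exact (toAlg_rel (Rel.arrow_mul_arrow a b hfst)).trans (map_zero _)
  refine arrow_eq_of_fst_src (hfst.symm.trans (Γ.next_fst a).symm) ?_
  by_contra hsrc
  exact h (mul_eq_zero_of_mul_idem (arrow_mul_idem_tgt a) (idem_src_mul_arrow b) (Ne.symm hsrc))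

section Paths

variable (K) in
/-- The path of length `k` in the Brauer quiver that starts with the arrow `a` and stays on its
cycle, as an element of the Brauer tree algebra. -/
noncomputable def path (a : Γ.Arrow) : ℕ → Γ.Alg K
  | 0 => Γ.idem K (src a)
  | k + 1 => path a k * Γ.arrow K ((Γ.next ^ k) a)

lemma path_zero (a : Γ.Arrow) : path K a 0 = Γ.idem K (src a) := rfl

lemma path_succ (a : Γ.Arrow) (k : ℕ) :
    path K a (k + 1) = path K a k * Γ.arrow K ((Γ.next ^ k) a) := rfl

lemma path_one (a : Γ.Arrow) : path K a 1 = Γ.arrow K a := idem_src_mul_arrow a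

lemma idem_src_mul_path (a : Γ.Arrow) (k : ℕ) : Γ.idem K (src a) * path K a k = path K a k := by
  induction k with
  | zero => exact idem_mul_self _
  | succ k ih => rw [path_succ, ← mul_assoc, ih]

lemma path_mul_idem (a : Γ.Arrow) (k : ℕ) :
    path K a k * Γ.idem K (src ((Γ.next ^ k) a)) = path K a k := by
  cases k with
  | zero => exact idem_mul_self _
  | succ k => rw [path_succ, ← tgt_next_pow, mul_assoc, arrow_mul_idem_tgt]

lemma path_mul_path (a : Γ.Arrow) (k l : ℕ) :
    path K a k * path K ((Γ.next ^ k) a) l = path K a (k + l) := by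
  induction l with
  | zero => exact path_mul_idem a k
  | succ l ih => rw [path_succ, ← mul_assoc, ih, ← add_assoc, path_succ, next_pow_add_apply]

lemma path_succ' (a : Γ.Arrow) (k : ℕ) :
    path K a (k + 1) = Γ.arrow K a * path K (Γ.next a) k := by
  rw [add_comm, ← path_mul_path, path_one, pow_one]

lemma path_succ_mul_arrow_eq_zero {a b : Γ.Arrow} {k : ℕ} (h : b ≠ (Γ.next ^ (k + 1)) a) :
    path K a (k + 1) * Γ.arrow K b = 0 := by
  rw [path_succ, mul_assoc]
  by_contra h0
  refine h ((eq_next_of_arrow_mul_arrow_ne_zero (right_ne_zero_of_mul h0)).trans ?_)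
  rw [pow_succ', Equiv.Perm.mul_apply]

lemma path_mul_path_eq_zero {a b : Γ.Arrow} (h : a.fst ≠ b.fst) {k l : ℕ} (hk : 0 < k)
    (hl : 0 < l) : path K a k * path K b l = 0 := by
  obtain ⟨k, rfl⟩ := Nat.exists_eq_add_one.2 hk
  obtain ⟨l, rfl⟩ := Nat.exists_eq_add_one.2 hl
  rw [path_succ' b, ← mul_assoc, path_succ_mul_arrow_eq_zero, zero_mul]
  rintro rfl
  exact h (next_pow_fst a _).symm

lemma path_eq_idem_mul_prod (a : Γ.Arrow) (k : ℕ) : path K a k = Γ.idem K (src a) *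
    ((List.range k).map fun i => Γ.arrow K ((Γ.next ^ i) a)).prod := by
  induction k with
  | zero => simp [path_zero]
  | succ k ih => rw [path_succ, ih, List.range_succ]; simp [mul_assoc]

lemma path_period_symm (a : Γ.Arrow) : path K a (period a) = path K a.symm (period a.symm) := by
  have h := toAlg_rel (Rel.cycle_eq (K := K) a)
  rw [freeCycle, freeCycle, map_list_prod, map_list_prod, List.map_map, List.map_map] at h
  rw [path_eq_idem_mul_prod, path_eq_idem_mul_prod, src_symm]
  exact congrArg _ h

variable [Finite V]

lemma path_eq_zero {a : Γ.Arrow} {k : ℕ} (hk : period a < k) : path K a k = 0 := by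
  obtain ⟨l, rfl⟩ := Nat.exists_eq_add_of_lt hk
  rw [add_assoc, ← path_mul_path, next_pow_period, path_period_symm]
  exact path_mul_path_eq_zero a.adj.ne' (period_pos _) l.succ_pos

end Paths

section SpanPath

variable (Γ K) in
/-- The linear span of all paths that stay on one cycle of the Brauer quiver. -/
noncomputable def spanPath : Submodule K (Γ.Alg K) :=
  Submodule.span K (Set.range fun p : Γ.Arrow × ℕ => path K p.1 p.2)

lemma path_mem_spanPath (a : Γ.Arrow) (k : ℕ) : path K a k ∈ spanPath Γ K :=
  Submodule.subset_span ⟨(a, k), rfl⟩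

lemma path_mul_idem_mem_spanPath (a : Γ.Arrow) (k : ℕ) (x : Γ.QVertex) :
    path K a k * Γ.idem K x ∈ spanPath Γ K := by
  by_cases h : src ((Γ.next ^ k) a) = x
  · rw [← h, path_mul_idem]
    exact path_mem_spanPath a k
  · rw [mul_eq_zero_of_mul_idem (path_mul_idem a k) (idem_mul_self x) h]
    exact Submodule.zero_mem _

lemma path_mul_arrow_mem_spanPath (a b : Γ.Arrow) (k : ℕ) :
    path K a k * Γ.arrow K b ∈ spanPath Γ K := by
  by_cases h : b = (Γ.next ^ k) a
  · rw [h, ← path_succ]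
    exact path_mem_spanPath a (k + 1)
  cases k with
  | succ k =>
    rw [path_succ_mul_arrow_eq_zero h]
    exact Submodule.zero_mem _
  | zero =>
    by_cases hsrc : src a = src b
    · rw [path_zero, hsrc, idem_src_mul_arrow, ← path_one]
      exact path_mem_spanPath b 1
    · rw [mul_eq_zero_of_mul_idem (path_mul_idem a 0) (idem_src_mul_arrow b) hsrc]
      exact Submodule.zero_mem _

lemma mul_toAlg_mem_spanPath {z : Γ.Alg K} (hz : z ∈ spanPath Γ K) (w : FreeAlgebra K Γ.Gen) :
    z * toAlg Γ K w ∈ spanPath Γ K := by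
  induction w using FreeAlgebra.induction generalizing z with
  | grade0 r =>
    rw [AlgHom.commutes, ← Algebra.commutes, ← Algebra.smul_def]
    exact Submodule.smul_mem _ r hz
  | grade1 g =>
    suffices h : spanPath Γ K ≤ (spanPath Γ K).comap (LinearMap.mulRight K (toAlg Γ K _)) from
      h hz
    rw [spanPath, Submodule.span_le]
    rintro _ ⟨⟨a, k⟩, rfl⟩
    cases g with
    | idem x => exact path_mul_idem_mem_spanPath a k x
    | arrow b => exact path_mul_arrow_mem_spanPath a b k
  | mul x y hx hy =>
    rw [map_mul, ← mul_assoc]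
    exact hy (hx hz)
  | add x y hx hy =>
    rw [map_add, mul_add]
    exact Submodule.add_mem _ (hx hz) (hy hz)

lemma spanPath_eq_top [Finite V] : spanPath Γ K = ⊤ := by
  have h1 : (1 : Γ.Alg K) ∈ spanPath Γ K := by
    have := Fintype.ofFinite Γ.QVertex
    rw [← sum_idem]
    refine Submodule.sum_mem _ fun x _ => ?_
    obtain ⟨a, rfl⟩ : ∃ a : Γ.Arrow, src a = x :=
      (exists_src_eq (Sym2.out_fst_mem x.1)).imp fun _ => And.right
    exact path_mem_spanPath a 0
  rw [eq_top_iff]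
  rintro z -
  obtain ⟨w, rfl⟩ := toAlg_surjective z
  simpa only [one_mul] using mul_toAlg_mem_spanPath h1 w

end SpanPath

end Algebra

end BrauerTree

namespace BrauerTree

variable {V : Type v} {Γ : BrauerTree V} {K : Type u} [Field K]

section UniserialRepresentation

open Matrix

variable [DecidableEq V]

/-- The representation of the free algebra given by the arrows of the cycle of `l` other than `l`
itself, every other arrow acting as zero. -/
noncomputable def freeRep (K : Type u) [Field K] [Fintype Γ.QVertex] (l : Γ.Arrow) :
    FreeAlgebra K Γ.Gen →ₐ[K] Matrix Γ.QVertex Γ.QVertex K :=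
  FreeAlgebra.lift K fun
    | .idem x => single x x 1
    | .arrow a => if a.fst = l.fst ∧ a ≠ l then single (src a) (tgt a) 1 else 0

variable [Fintype Γ.QVertex] (l : Γ.Arrow)

lemma freeRep_freeIdem (x : Γ.QVertex) : freeRep K l (Γ.freeIdem K x) = single x x 1 :=
  FreeAlgebra.lift_ι_apply _ _

lemma freeRep_freeArrow (a : Γ.Arrow) : freeRep K l (Γ.freeArrow K a) =
    if a.fst = l.fst ∧ a ≠ l then single (src a) (tgt a) 1 else 0 :=
  FreeAlgebra.lift_ι_apply _ _

variable [Finite V]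

lemma freeRep_freeCycle (a : Γ.Arrow) : freeRep K l (Γ.freeCycle K a) = 0 := by
  rw [freeCycle, map_list_prod, List.map_map]
  apply List.prod_eq_zero
  rw [List.mem_map]
  by_cases h : a.fst = l.fst
  · obtain ⟨k, hk, rfl⟩ := exists_next_pow_eq h
    exact ⟨k, List.mem_range.2 hk, by simp [freeRep_freeArrow]⟩
  · exact ⟨0, List.mem_range.2 (period_pos a), by simp [freeRep_freeArrow, h]⟩

lemma freeRep_eq_of_rel {x y : FreeAlgebra K Γ.Gen} (h : Γ.Rel K x y) :
    freeRep K l x = freeRep K l y := by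
  cases h with
  | idem_mul_self x => simp [freeRep_freeIdem]
  | idem_mul_idem x y h => simp [freeRep_freeIdem, h]
  | sum_idem =>
    rw [finsum_eq_sum_of_fintype, map_sum, map_one]
    simp only [freeRep_freeIdem]
    exact sum_single_one
  | src_mul a => rw [map_mul, freeRep_freeIdem, freeRep_freeArrow]; split_ifs <;> simp
  | mul_tgt a => rw [map_mul, freeRep_freeIdem, freeRep_freeArrow]; split_ifs <;> simp
  | arrow_mul_arrow a b h =>
    rw [map_mul, freeRep_freeArrow, freeRep_freeArrow, map_zero]
    split_ifs with ha hb
    · exact absurd (ha.1.trans hb.1.symm) h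
    all_goals simp
  | cycle_eq a => rw [freeRep_freeCycle, freeRep_freeCycle]

/-- The representation of the Brauer tree algebra induced by `freeRep`. It makes the cycle of `l`
uniserial and detects that paths shorter than the full cycle are nonzero. -/
noncomputable def rep (K : Type u) [Field K] (l : Γ.Arrow) :
    Γ.Alg K →ₐ[K] Matrix Γ.QVertex Γ.QVertex K :=
  RingQuot.liftAlgHom K ⟨freeRep K l, fun _ _ => freeRep_eq_of_rel l⟩

lemma rep_idem (x : Γ.QVertex) : rep K l (Γ.idem K x) = single x x 1 :=
  (RingQuot.liftAlgHom_mkAlgHom_apply K _ _ _).trans (freeRep_freeIdem l x)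

lemma rep_arrow {a : Γ.Arrow} (h : a.fst = l.fst) (ha : a ≠ l) :
    rep K l (Γ.arrow K a) = single (src a) (tgt a) 1 :=
  (RingQuot.liftAlgHom_mkAlgHom_apply K _ _ _).trans
    ((freeRep_freeArrow l a).trans (if_pos ⟨h, ha⟩))

lemma rep_path {a : Γ.Arrow} {k : ℕ} (hk : k < period a) {j : ℕ} (hj : j ≤ k) :
    rep K ((Γ.next ^ k) a) (path K a j) = single (src a) (src ((Γ.next ^ j) a)) 1 := by
  induction j with
  | zero => exact rep_idem _ _
  | succ j ih =>
    have hne : (Γ.next ^ j) a ≠ (Γ.next ^ k) a := fun h => by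
      have := next_pow_inj (by lia) hk h
      lia
    rw [path_succ, map_mul, ih (by lia), rep_arrow _ (by simp only [next_pow_fst]) hne,
      tgt_next_pow]
    simp

end UniserialRepresentation

lemma path_ne_zero [Finite V] {a : Γ.Arrow} {k : ℕ} (hk : k < period a) : path K a k ≠ 0 := by
  classical
  have := Fintype.ofFinite Γ.QVertex
  intro h
  have h0 := rep_path (K := K) hk le_rfl
  rw [h, map_zero] at h0
  simpa using congrFun (congrFun h0 (src a)) (src ((Γ.next ^ k) a))

section Peirce

/-- The Peirce component `e_x A e_y` of the Brauer tree algebra, which is identified with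
`Hom(A e_x, A e_y)` by evaluation at `e_x`. -/
noncomputable def peirce (K : Type u) [Field K] (x y : Γ.QVertex) : Submodule K (Γ.Alg K) :=
  LinearMap.eqLocus (LinearMap.mulLeftRight K (Γ.idem K x, Γ.idem K y)) LinearMap.id

variable {x y x' : Γ.QVertex} {z w : Γ.Alg K}

lemma mem_peirce_iff : z ∈ peirce K x y ↔ Γ.idem K x * z * Γ.idem K y = z := by
  rw [peirce, LinearMap.mem_eqLocus, LinearMap.mulLeftRight_apply, LinearMap.id_apply]

lemma path_mem_peirce (a : Γ.Arrow) (k : ℕ) :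
    path K a k ∈ peirce K (src a) (src ((Γ.next ^ k) a)) := by
  rw [mem_peirce_iff, idem_src_mul_path, path_mul_idem]

variable [Finite V]

lemma peirce_le {S : Submodule K (Γ.Alg K)}
    (h : ∀ (a : Γ.Arrow) (k : ℕ), src a = x → src ((Γ.next ^ k) a) = y → path K a k ∈ S) :
    peirce K x y ≤ S := by
  suffices hS : spanPath Γ K ≤ S.comap (LinearMap.mulLeftRight K (Γ.idem K x, Γ.idem K y)) by
    intro z hz
    rw [← mem_peirce_iff.1 hz]
    exact hS (spanPath_eq_top (Γ := Γ) (K := K) ▸ Submodule.mem_top)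
  rw [spanPath, Submodule.span_le]
  rintro _ ⟨⟨a, k⟩, rfl⟩
  change Γ.idem K x * path K a k * Γ.idem K y ∈ S
  by_cases hx : src a = x
  · rw [← hx, idem_src_mul_path]
    by_cases hy : src ((Γ.next ^ k) a) = y
    · rw [← hy, path_mul_idem]
      exact h a k hx hy
    · rw [mul_eq_zero_of_mul_idem (path_mul_idem a k) (idem_mul_self y) hy]
      exact S.zero_mem
  · rw [mul_eq_zero_of_mul_idem (idem_mul_self x) (idem_src_mul_path a k) (Ne.symm hx), zero_mul]
    exact S.zero_mem

lemma exists_mem_of_mem_peirce (hz : z ∈ peirce K x y) (h0 : z ≠ 0) : ∃ p, p ∈ x.1 ∧ p ∈ y.1 := by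
  by_contra h
  refine h0 ((Submodule.mem_bot K).1 (peirce_le ?_ hz))
  rintro a k rfl rfl
  exact absurd ⟨a.fst, fst_mem_src a, fst_mem_src_next_pow a k⟩ h

lemma exists_eq_smul_path {a : Γ.Arrow} {k : ℕ} (hk : 0 < k) (hk' : k < period a)
    (hz : z ∈ peirce K (src a) (src ((Γ.next ^ k) a))) : ∃ c : K, c • path K a k = z := by
  refine Submodule.mem_span_singleton.1 (peirce_le (fun b l hsrc hsrc' => ?_) hz)
  obtain rfl : b = a := arrow_eq_of_fst_src (eq_of_mem_mem (src_next_pow_ne hk hk')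
    (hsrc ▸ fst_mem_src b) (hsrc' ▸ fst_mem_src_next_pow b l) (fst_mem_src a)
    (fst_mem_src_next_pow a k)) hsrc
  rcases lt_trichotomy l (period b) with hl | rfl | hl
  · obtain rfl := next_pow_inj hl hk'
      (arrow_eq_of_fst_src (by rw [next_pow_fst, next_pow_fst]) hsrc')
    exact Submodule.mem_span_singleton_self _
  · rw [next_pow_period] at hsrc'
    exact absurd hsrc' (src_next_pow_ne hk hk')
  · rw [path_eq_zero hl]
    exact Submodule.zero_mem _

lemma exists_arc_eq_smul_path (hxy : x ≠ y) (hz : z ∈ peirce K x y) (h0 : z ≠ 0) :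
    ∃ (a : Γ.Arrow) (k : ℕ) (c : K), 0 < k ∧ src a = x ∧ src ((Γ.next ^ k) a) = y ∧
      c • path K a k = z := by
  obtain ⟨p, hpx, hpy⟩ := exists_mem_of_mem_peirce hz h0
  obtain ⟨a, k, -, hk, hk', rfl, rfl⟩ := exists_arc hxy hpx hpy
  obtain ⟨c, hc⟩ := exists_eq_smul_path hk hk' hz
  exact ⟨a, k, c, hk, rfl, rfl, hc⟩

lemma exists_mem_of_mul_ne_zero (hxy : x ≠ y) (hyx' : y ≠ x') (hz : z ∈ peirce K x y)
    (hw : w ∈ peirce K y x') (h : z * w ≠ 0) : ∃ p, p ∈ x.1 ∧ p ∈ y.1 ∧ p ∈ x'.1 := by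
  obtain ⟨a, k, c, hk, rfl, rfl, rfl⟩ :=
    exists_arc_eq_smul_path hxy hz (left_ne_zero_of_mul h)
  obtain ⟨b, l, d, hl, _, rfl, rfl⟩ :=
    exists_arc_eq_smul_path hyx' hw (right_ne_zero_of_mul h)
  have hab : a.fst = b.fst := by
    by_contra hab
    rw [smul_mul_smul_comm, path_mul_path_eq_zero hab hk hl, smul_zero] at h
    exact h rfl
  exact ⟨a.fst, fst_mem_src a, fst_mem_src_next_pow a k, hab ▸ fst_mem_src_next_pow b l⟩

lemma mul_ne_zero_of_mem_peirce {a : Γ.Arrow} {k l : ℕ} (hk : 0 < k) (hl : 0 < l)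
    (hkl : k + l < period a) (hz : z ∈ peirce K (src a) (src ((Γ.next ^ k) a)))
    (hw : w ∈ peirce K (src ((Γ.next ^ k) a)) (src ((Γ.next ^ (k + l)) a)))
    (hz0 : z ≠ 0) (hw0 : w ≠ 0) : z * w ≠ 0 := by
  obtain ⟨c, rfl⟩ := exists_eq_smul_path hk (by lia) hz
  rw [next_pow_add_apply] at hw
  obtain ⟨d, rfl⟩ := exists_eq_smul_path hl (by rw [period_next_pow]; lia) hw
  rw [smul_mul_smul_comm, path_mul_path]
  exact smul_ne_zero (mul_ne_zero (left_ne_zero_of_smul hz0) (left_ne_zero_of_smul hw0))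
    (path_ne_zero hkl)

end Peirce

end BrauerTree

namespace BrauerTree

variable {V : Type v} {Γ : BrauerTree V} {K : Type u} [Field K]

section ACycles

lemma IsNonzeroChain.fst_eq {c : List Γ.Arrow} (hc : Γ.IsNonzeroChain K c) {a b : Γ.Arrow}
    (ha : a ∈ c) (hb : b ∈ c) : a.fst = b.fst := by
  have h : c.IsChain fun a b => a.fst = b.fst := hc.2.imp fun a b hab => by
    rw [eq_next_of_arrow_mul_arrow_ne_zero hab, Γ.next_fst]
  have : IsTrans Γ.Arrow fun a b => a.fst = b.fst := ⟨fun _ _ _ => Eq.trans⟩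
  have : Std.Symm fun a b : Γ.Arrow => a.fst = b.fst := ⟨fun _ _ => Eq.symm⟩
  exact h.pairwise.forall_of_forall (R := fun a b : Γ.Arrow => a.fst = b.fst)
    (fun _ _ => rfl) ha hb

lemma SameACycle.fst_eq {a b : Γ.Arrow} (h : Γ.SameACycle K a b) : a.fst = b.fst := by
  obtain ⟨c, hc, ha, hb⟩ := h
  exact hc.1.fst_eq ha hb

lemma IsNonzeroChain.append_next [Finite V] {c : List Γ.Arrow} {a : Γ.Arrow}
    (hc : Γ.IsNonzeroChain K (c ++ [a])) (ha : 2 < period a) (hn : Γ.next a ∉ c ++ [a]) :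
    Γ.IsNonzeroChain K (c ++ [a] ++ [Γ.next a]) := by
  refine ⟨List.nodup_append.2 ⟨hc.1, List.nodup_singleton _, ?_⟩,
    List.isChain_append.2 ⟨hc.2, List.isChain_singleton _, ?_⟩⟩
  · rintro x hx y hy rfl
    exact hn (List.mem_singleton.1 hy ▸ hx)
  · have h := path_ne_zero (K := K) ha
    rw [path_succ, path_one, pow_one] at h
    simpa using h

variable [Finite V] {c : List Γ.Arrow} {a : Γ.Arrow}

lemma IsACycle.next_mem (hc : Γ.IsACycle K c) (ha : a ∈ c) (hp : 2 < period a) : Γ.next a ∈ c := by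
  obtain ⟨l₁, l₂, rfl⟩ := List.append_of_mem ha
  cases l₂ with
  | cons b l₂ =>
    have h := (List.isChain_append.1 hc.1.2).2.1
    rw [List.isChain_cons_cons] at h
    rw [← eq_next_of_arrow_mul_arrow_ne_zero h.1]
    simp
  | nil =>
    by_contra hn
    simpa using hc.2 _ (hc.1.append_next hp hn) (List.sublist_append_left _ _)

lemma IsACycle.next_pow_mem (hc : Γ.IsACycle K c) (ha : a ∈ c) (hp : 2 < period a) (k : ℕ) :
    (Γ.next ^ k) a ∈ c := by
  induction k with
  | zero => exact ha
  | succ k ih =>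
    rw [pow_succ', Equiv.Perm.mul_apply]
    exact hc.next_mem ih (by rwa [period_next_pow])

lemma IsACycle.onCycle_iff (hc : Γ.IsACycle K c) (ha : a ∈ c) {x : Γ.QVertex} :
    OnCycle c x ↔ a.fst ∈ x.1 := by
  constructor
  · rintro ⟨b, hb, rfl | rfl⟩ <;> rw [hc.1.fst_eq ha hb]
    exacts [fst_mem_src b, fst_mem_tgt b]
  · intro hx
    obtain ⟨b, hb, rfl⟩ := exists_src_eq hx
    obtain ⟨k, hk, rfl⟩ := exists_next_pow_eq hb.symm
    by_cases hp : 2 < period a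
    · exact ⟨_, hc.next_pow_mem ha hp k, .inl rfl⟩
    · obtain rfl | rfl : k = 0 ∨ k = 1 := by lia
      · exact ⟨a, ha, .inl rfl⟩
      · exact ⟨a, ha, .inr rfl⟩

end ACycles

section Walks

variable {p q : V}

lemma exists_walk_edges_eq (x : Γ.QVertex) (hp : p ∈ x.1) (hq : q ∈ x.1) :
    ∃ W : Γ.graph.Walk p q, ∀ e ∈ W.edges, e = x.1 := by
  obtain ⟨x, hx⟩ := x
  by_cases h : p = q
  · subst h
    exact ⟨.nil, by simp⟩
  · obtain rfl := (Sym2.mem_and_mem_iff h).1 ⟨hp, hq⟩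
    have hadj : Γ.graph.Adj p q := hx
    exact ⟨hadj.toWalk, by simp⟩

lemma mem_edges_of_walk {x : Γ.QVertex} (hp : p ∈ x.1) (hq : q ∈ x.1) (h : p ≠ q)
    (W : Γ.graph.Walk p q) : x.1 ∈ W.edges := by
  obtain ⟨x, hx⟩ := x
  obtain rfl := (Sym2.mem_and_mem_iff h).1 ⟨hp, hq⟩
  have hb := SimpleGraph.isAcyclic_iff_forall_isBridge.1 Γ.isTree.2 hx
  exact SimpleGraph.isBridge_iff_forall_walk_mem_edges.1 hb W

lemma exists_mem_edges_of_walks (h : p ≠ q) (W W' : Γ.graph.Walk p q) :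
    ∃ e ∈ W.edges, e ∈ W'.edges := by
  classical
  have hW := (Γ.isTree.2.subsingleton_path p q).elim W.toPath W'.toPath
  have hne : (W.toPath : Γ.graph.Walk p q).edges ≠ [] := fun h' =>
    SimpleGraph.Walk.not_nil_of_ne h (SimpleGraph.Walk.edges_eq_nil.1 h')
  obtain ⟨e, he⟩ := List.exists_mem_of_ne_nil _ hne
  exact ⟨e, W.edges_toPath_subset_edges he, W'.edges_toPath_subset_edges (hW ▸ he)⟩

end Walks

end BrauerTree

namespace BrauerTree

variable {V : Type v} {Γ : BrauerTree V} {K : Type u} [Field K]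

namespace Diagram

variable (Θ : Γ.Diagram K) {i j k : ℕ}

section Indexing

/-- The number of arrows of a diagram. -/
abbrev length : ℕ := Θ.steps.length

/-- The `i`-th step of a diagram, counted from `0`; a junk value unless `i < Θ.length`. -/
def step (i : ℕ) : Γ.Step := Θ.steps.getD i (Θ.steps.head Θ.steps_ne_nil)

/-- The arrow of the `i`-th step of a diagram. -/
abbrev arrow (i : ℕ) : Γ.Arrow := (Θ.step i).1

/-- The `i`-th vertex of a diagram, counted from `0`; a junk value unless `i ≤ Θ.length`. -/
def vertex : ℕ → Γ.QVertex
  | 0 => (Θ.step 0).start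
  | i + 1 => (Θ.step i).finish

lemma step_eq_getElem (hi : i < Θ.length) : Θ.step i = Θ.steps[i]'hi :=
  List.getD_eq_getElem _ _ hi

lemma start_step (hi : i < Θ.length) : (Θ.step i).start = Θ.vertex i := by
  cases i with
  | zero => rfl
  | succ i =>
    rw [vertex, step_eq_getElem Θ hi, step_eq_getElem Θ (Nat.lt_of_succ_lt hi)]
    exact (List.isChain_iff_getElem.1 Θ.connected i hi).symm

lemma vertices_eq_cons : Θ.vertices = Θ.vertex 0 :: Θ.steps.map Step.finish := by
  obtain ⟨s, l, h⟩ := List.exists_cons_of_ne_nil Θ.steps_ne_nil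
  simp [vertices, vertex, step, h, stepVertices]

lemma getElem?_vertices (hi : i ≤ Θ.length) : Θ.vertices[i]? = some (Θ.vertex i) := by
  cases i with
  | zero => simp [vertices_eq_cons]
  | succ i =>
    rw [vertices_eq_cons, List.getElem?_cons_succ, List.getElem?_map,
      List.getElem?_eq_getElem hi, vertex, step_eq_getElem Θ hi, Option.map_some]

lemma length_vertices : Θ.vertices.length = Θ.length + 1 := by
  rw [vertices_eq_cons, List.length_cons, List.length_map, length]

lemma mem_vertices_iff {x : Γ.QVertex} : x ∈ Θ.vertices ↔ ∃ i ≤ Θ.length, Θ.vertex i = x := by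
  rw [List.mem_iff_getElem?]
  constructor
  · rintro ⟨i, hi⟩
    have hlt : i < Θ.length + 1 :=
      Θ.length_vertices ▸ (List.getElem?_eq_some_iff.1 hi).1
    exact ⟨i, Nat.le_of_lt_succ hlt,
      Option.some_inj.1 ((Θ.getElem?_vertices (Nat.le_of_lt_succ hlt)).symm.trans hi)⟩
  · rintro ⟨i, hi, rfl⟩
    exact ⟨i, Θ.getElem?_vertices hi⟩

lemma vertex_mem_vertices (hi : i ≤ Θ.length) : Θ.vertex i ∈ Θ.vertices :=
  Θ.mem_vertices_iff.2 ⟨i, hi, rfl⟩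

lemma mem_arrows_iff {a : Γ.Arrow} : a ∈ Θ.arrows ↔ ∃ i < Θ.length, Θ.arrow i = a := by
  rw [arrows, List.mem_map]
  constructor
  · rintro ⟨s, hs, rfl⟩
    obtain ⟨i, hi, rfl⟩ := List.mem_iff_getElem.1 hs
    exact ⟨i, hi, by rw [arrow, step_eq_getElem Θ hi]⟩
  · rintro ⟨i, hi, rfl⟩
    exact ⟨_, List.getElem_mem hi, by rw [arrow, step_eq_getElem Θ hi]⟩

lemma arrow_mem_arrows (hi : i < Θ.length) : Θ.arrow i ∈ Θ.arrows :=
  Θ.mem_arrows_iff.2 ⟨i, hi, rfl⟩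

lemma isEndpoint_vertex_zero : Θ.IsEndpoint (Θ.vertex 0) := by
  left
  rw [vertices_eq_cons, List.head?_cons]

lemma isEndpoint_vertex_length : Θ.IsEndpoint (Θ.vertex Θ.length) := by
  right
  rw [List.getLast?_eq_getElem?, length_vertices]
  exact Θ.getElem?_vertices le_rfl

variable {Θ}

lemma vertex_inj (hi : i ≤ Θ.length) (hj : j ≤ Θ.length) (h : Θ.vertex i = Θ.vertex j) :
    i = j := by
  have hlt : i < Θ.vertices.length := by rwa [length_vertices, Nat.lt_succ_iff]
  refine (List.getElem?_inj hlt Θ.nodup).1 ?_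
  exact (Θ.getElem?_vertices hi).trans (h ▸ (Θ.getElem?_vertices hj).symm)

lemma src_arrow (hi : i < Θ.length) :
    src (Θ.arrow i) = if (Θ.step i).2 then Θ.vertex i else Θ.vertex (i + 1) := by
  rw [← start_step Θ hi, vertex, Step.start, Step.finish]
  split_ifs <;> rfl

lemma tgt_arrow (hi : i < Θ.length) :
    tgt (Θ.arrow i) = if (Θ.step i).2 then Θ.vertex (i + 1) else Θ.vertex i := by
  rw [← start_step Θ hi, vertex, Step.start, Step.finish]
  split_ifs <;> rfl

lemma src_arrow_and_tgt_arrow (hi : i < Θ.length) :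
    (src (Θ.arrow i) = Θ.vertex i ∧ tgt (Θ.arrow i) = Θ.vertex (i + 1)) ∨
      (src (Θ.arrow i) = Θ.vertex (i + 1) ∧ tgt (Θ.arrow i) = Θ.vertex i) := by
  rw [src_arrow hi, tgt_arrow hi]
  split_ifs <;> simp

lemma src_arrow_or_tgt_arrow (hi : i < Θ.length) :
    src (Θ.arrow i) = Θ.vertex i ∨ tgt (Θ.arrow i) = Θ.vertex i :=
  (src_arrow_and_tgt_arrow hi).imp And.left And.right

lemma src_arrow_or_tgt_arrow_succ (hi : i < Θ.length) :
    src (Θ.arrow i) = Θ.vertex (i + 1) ∨ tgt (Θ.arrow i) = Θ.vertex (i + 1) :=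
  ((src_arrow_and_tgt_arrow hi).imp And.right And.left).symm

lemma src_mem_vertices {a : Γ.Arrow} (ha : a ∈ Θ.arrows) : src a ∈ Θ.vertices := by
  obtain ⟨i, hi, rfl⟩ := Θ.mem_arrows_iff.1 ha
  rcases src_arrow_and_tgt_arrow hi with ⟨h, -⟩ | ⟨h, -⟩ <;> rw [h]
  exacts [Θ.vertex_mem_vertices hi.le, Θ.vertex_mem_vertices hi]

lemma tgt_mem_vertices {a : Γ.Arrow} (ha : a ∈ Θ.arrows) : tgt a ∈ Θ.vertices := by
  obtain ⟨i, hi, rfl⟩ := Θ.mem_arrows_iff.1 ha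
  rcases src_arrow_and_tgt_arrow hi with ⟨-, h⟩ | ⟨-, h⟩ <;> rw [h]
  exacts [Θ.vertex_mem_vertices hi, Θ.vertex_mem_vertices hi.le]

lemma eq_or_eq_of_src_or_tgt_eq_vertex (hi : i ≤ Θ.length) (hj : j < Θ.length)
    (h : src (Θ.arrow j) = Θ.vertex i ∨ tgt (Θ.arrow j) = Θ.vertex i) : i = j ∨ i = j + 1 := by
  rcases src_arrow_and_tgt_arrow hj with ⟨h₁, h₂⟩ | ⟨h₁, h₂⟩ <;> rw [h₁, h₂] at h
  · exact h.imp (fun h => vertex_inj hi hj.le h.symm) fun h => vertex_inj hi hj h.symm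
  · exact h.symm.imp (fun h => vertex_inj hi hj.le h.symm) fun h => vertex_inj hi hj h.symm

lemma arrow_inj (hi : i < Θ.length) (hj : j < Θ.length) (h : Θ.arrow i = Θ.arrow j) : i = j := by
  have h₁ := eq_or_eq_of_src_or_tgt_eq_vertex hi.le hj (h ▸ src_arrow_or_tgt_arrow hi)
  have h₂ := eq_or_eq_of_src_or_tgt_eq_vertex hj.le hi (h ▸ src_arrow_or_tgt_arrow hj)
  lia

lemma src_ne_tgt {a : Γ.Arrow} (ha : a ∈ Θ.arrows) : src a ≠ tgt a := by
  obtain ⟨i, hi, rfl⟩ := Θ.mem_arrows_iff.1 ha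
  have hne : Θ.vertex i ≠ Θ.vertex (i + 1) := fun h => by
    have := vertex_inj hi.le hi h
    lia
  rcases src_arrow_and_tgt_arrow hi with ⟨h₁, h₂⟩ | ⟨h₁, h₂⟩ <;> rw [h₁, h₂]
  exacts [hne, hne.symm]

lemma fst_arrow_mem_vertex (hi : i < Θ.length) : (Θ.arrow i).fst ∈ (Θ.vertex i).1 := by
  rcases src_arrow_or_tgt_arrow hi with h | h <;> rw [← h]
  exacts [fst_mem_src _, fst_mem_tgt _]

lemma fst_arrow_mem_vertex_succ (hi : i < Θ.length) :
    (Θ.arrow i).fst ∈ (Θ.vertex (i + 1)).1 := by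
  rcases src_arrow_or_tgt_arrow_succ hi with h | h <;> rw [← h]
  exacts [fst_mem_src _, fst_mem_tgt _]

lemma fst_arrow_eq_of_snd_step_eq (hi : i + 1 < Θ.length)
    (h : (Θ.step i).2 = (Θ.step (i + 1)).2) : (Θ.arrow i).fst = (Θ.arrow (i + 1)).fst := by
  have hturn := List.isChain_iff_getElem.1 Θ.turns i hi
  rw [← step_eq_getElem Θ hi, ← step_eq_getElem Θ (Nat.lt_of_succ_lt hi)] at hturn
  by_contra hne
  exact hturn.2 (fun hsame => hne hsame.fst_eq) h

lemma next_eq_of_tgt_eq_src {a b : Γ.Arrow} (ha : a ∈ Θ.arrows) (hb : b ∈ Θ.arrows)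
    (h : tgt a = src b) : Γ.next a = b := by
  suffices hfst : a.fst = b.fst from arrow_eq_of_fst_src ((Γ.next_fst a).trans hfst) h
  obtain ⟨i, hi, rfl⟩ := Θ.mem_arrows_iff.1 ha
  obtain ⟨j, hj, rfl⟩ := Θ.mem_arrows_iff.1 hb
  rw [tgt_arrow hi, src_arrow hj] at h
  cases hsi : (Θ.step i).2 <;> cases hsj : (Θ.step j).2 <;>
    simp only [hsi, hsj, Bool.false_eq_true, if_true, if_false] at h
  · obtain rfl := vertex_inj hi.le hj h
    exact (fst_arrow_eq_of_snd_step_eq hi (hsj.trans hsi.symm)).symm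
  · rw [vertex_inj hi.le hj.le h]
  · rw [Nat.succ.inj (vertex_inj hi hj h)]
  · obtain rfl := vertex_inj hi hj.le h
    exact fst_arrow_eq_of_snd_step_eq hj (hsi.trans hsj.symm)

end Indexing

section Tree

variable {Θ} {p q : V} {x y t : Γ.QVertex}

lemma exists_walk (hij : i ≤ j) (hj : j ≤ Θ.length) (hp : p ∈ (Θ.vertex i).1)
    (hq : q ∈ (Θ.vertex j).1) :
    ∃ W : Γ.graph.Walk p q, ∀ e ∈ W.edges, ∃ k, i ≤ k ∧ k ≤ j ∧ e = (Θ.vertex k).1 := by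
  induction j, hij using Nat.le_induction generalizing q with
  | base =>
    obtain ⟨W, hW⟩ := exists_walk_edges_eq _ hp hq
    exact ⟨W, fun e he => ⟨i, le_rfl, le_rfl, hW e he⟩⟩
  | succ j hij ih =>
    obtain ⟨W, hW⟩ := ih (Nat.le_of_succ_le hj) (fst_arrow_mem_vertex hj)
    obtain ⟨W', hW'⟩ := exists_walk_edges_eq _ (fst_arrow_mem_vertex_succ hj) hq
    refine ⟨W.append W', fun e he => ?_⟩
    rw [SimpleGraph.Walk.edges_append, List.mem_append] at he
    rcases he with he | he
    · obtain ⟨k, hik, hkj, rfl⟩ := hW e he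
      exact ⟨k, hik, hkj.trans j.le_succ, rfl⟩
    · exact ⟨j + 1, Nat.le_succ_of_le hij, le_rfl, hW' e he⟩

lemma exists_walk_of_mem_vertices (hx : x ∈ Θ.vertices) (hy : y ∈ Θ.vertices) (hp : p ∈ x.1)
    (hq : q ∈ y.1) : ∃ W : Γ.graph.Walk p q, ∀ e ∈ W.edges, ∃ z ∈ Θ.vertices, e = z.1 := by
  obtain ⟨i, hi, rfl⟩ := Θ.mem_vertices_iff.1 hx
  obtain ⟨j, hj, rfl⟩ := Θ.mem_vertices_iff.1 hy
  wlog hij : i ≤ j generalizing i j p q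
  · obtain ⟨W, hW⟩ := this j hj hy hq i hi hx hp (le_of_not_ge hij)
    exact ⟨W.reverse, by simpa using hW⟩
  · obtain ⟨W, hW⟩ := exists_walk hij hj hp hq
    refine ⟨W, fun e he => ?_⟩
    obtain ⟨k, -, hkj, rfl⟩ := hW e he
    exact ⟨_, Θ.vertex_mem_vertices (hkj.trans hj), rfl⟩

lemma eq_of_disjoint {Θ' : Γ.Diagram K} (hdisj : ∀ x ∈ Θ.vertices, x ∉ Θ'.vertices)
    {x' y' : Γ.QVertex} (hx : x ∈ Θ.vertices) (hy : y ∈ Θ.vertices) (hx' : x' ∈ Θ'.vertices)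
    (hy' : y' ∈ Θ'.vertices) (hpx : p ∈ x.1) (hqy : q ∈ y.1) (hpx' : p ∈ x'.1)
    (hqy' : q ∈ y'.1) : p = q := by
  by_contra h
  obtain ⟨W, hW⟩ := exists_walk_of_mem_vertices hx hy hpx hqy
  obtain ⟨W', hW'⟩ := exists_walk_of_mem_vertices hx' hy' hpx' hqy'
  obtain ⟨e, he, he'⟩ := exists_mem_edges_of_walks h W W'
  obtain ⟨z, hz, rfl⟩ := hW e he
  obtain ⟨z', hz', h'⟩ := hW' _ he'
  exact hdisj z hz (Subtype.ext h' ▸ hz')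

/- Otherwise the edge `Θ.vertex i` joins `p` to `(Θ.arrow i).fst`, and the later vertices of the
diagram give a walk between these two that avoids this edge. -/
lemma fst_arrow_eq_of_mem_of_mem (hij : i < j) (hj : j ≤ Θ.length) (hpi : p ∈ (Θ.vertex i).1)
    (hpj : p ∈ (Θ.vertex j).1) : (Θ.arrow i).fst = p := by
  by_contra h
  have hi := hij.trans_le hj
  obtain ⟨W, hW⟩ := exists_walk hij hj (fst_arrow_mem_vertex_succ hi) hpj
  obtain ⟨k, hik, hkj, heq⟩ := hW _ (mem_edges_of_walk (fst_arrow_mem_vertex hi) hpi h W)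
  have := vertex_inj hi.le (hkj.trans hj) (Subtype.ext heq)
  lia

lemma fst_arrow_eq_of_le_of_lt (hik : i ≤ k) (hkj : k < j) (hj : j ≤ Θ.length)
    (hpi : p ∈ (Θ.vertex i).1) (hpj : p ∈ (Θ.vertex j).1) : (Θ.arrow k).fst = p := by
  induction k, hik using Nat.le_induction with
  | base => exact fst_arrow_eq_of_mem_of_mem hkj hj hpi hpj
  | succ k _ ih =>
    have hkj' := Nat.lt_of_succ_lt hkj
    refine fst_arrow_eq_of_mem_of_mem hkj hj ?_ hpj
    exact ih hkj' ▸ fst_arrow_mem_vertex_succ (hkj'.trans_le hj)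

lemma exists_arrow_of_mem_of_mem (hx : x ∈ Θ.vertices) (hy : y ∈ Θ.vertices) (hxy : x ≠ y)
    (hpx : p ∈ x.1) (hpy : p ∈ y.1) : ∃ a ∈ Θ.arrows, a.fst = p ∧ (src a = x ∨ tgt a = x) := by
  obtain ⟨i, hi, rfl⟩ := Θ.mem_vertices_iff.1 hx
  obtain ⟨j, hj, rfl⟩ := Θ.mem_vertices_iff.1 hy
  rcases lt_trichotomy i j with h | rfl | h
  · exact ⟨_, Θ.arrow_mem_arrows (h.trans_le hj), fst_arrow_eq_of_mem_of_mem h hj hpx hpy,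
      src_arrow_or_tgt_arrow (h.trans_le hj)⟩
  · exact absurd rfl hxy
  · obtain ⟨k, rfl⟩ := Nat.exists_eq_add_one.2 (Nat.zero_lt_of_lt h)
    exact ⟨_, Θ.arrow_mem_arrows hi,
      fst_arrow_eq_of_le_of_lt (Nat.le_of_lt_succ h) k.lt_succ_self hi hpy hpx,
      src_arrow_or_tgt_arrow_succ hi⟩

lemma fst_arrow_ne_of_isSink_or_isSource (hi : i + 1 < Θ.length)
    (ht : Θ.IsSink (Θ.vertex (i + 1)) ∨ Θ.IsSource (Θ.vertex (i + 1))) :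
    (Θ.arrow i).fst ≠ (Θ.arrow (i + 1)).fst := by
  intro hfst
  have hi' := Nat.lt_of_succ_lt hi
  have ha := Θ.arrow_mem_arrows hi'
  have hb := Θ.arrow_mem_arrows hi
  have hends := And.intro (src_arrow_or_tgt_arrow_succ hi') (src_arrow_or_tgt_arrow hi)
  refine (arrow_inj hi' hi ?_).not_lt i.lt_succ_self
  rcases ht with ht | ht
  · exact arrow_eq_of_fst_tgt hfst ((hends.1.resolve_left (ht.2 _ ha)).trans
      (hends.2.resolve_left (ht.2 _ hb)).symm)
  · exact arrow_eq_of_fst_src hfst ((hends.1.resolve_right (ht.2 _ ha)).trans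
      (hends.2.resolve_right (ht.2 _ hb)).symm)

lemma exists_arrow_of_not_isEndpoint (ht : Θ.IsSink t ∨ Θ.IsSource t) (hend : ¬ Θ.IsEndpoint t)
    (hp : p ∈ t.1) : ∃ a ∈ Θ.arrows, a.fst = p ∧ (src a = t ∨ tgt a = t) := by
  obtain ⟨i, hi, rfl⟩ := Θ.mem_vertices_iff.1 (ht.elim And.left And.left)
  cases i with
  | zero => exact absurd Θ.isEndpoint_vertex_zero hend
  | succ i =>
    have hlt : i + 1 < Θ.length :=
      hi.lt_of_ne fun h => hend (h ▸ Θ.isEndpoint_vertex_length)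
    have hmem : (Θ.vertex (i + 1)).1 = s((Θ.arrow i).fst, (Θ.arrow (i + 1)).fst) :=
      (Sym2.mem_and_mem_iff (fst_arrow_ne_of_isSink_or_isSource hlt ht)).1
        ⟨fst_arrow_mem_vertex_succ hi, fst_arrow_mem_vertex hlt⟩
    rw [hmem, Sym2.mem_iff] at hp
    rcases hp with rfl | rfl
    · exact ⟨_, Θ.arrow_mem_arrows hi, rfl, src_arrow_or_tgt_arrow_succ hi⟩
    · exact ⟨_, Θ.arrow_mem_arrows hlt, rfl, src_arrow_or_tgt_arrow hlt⟩

lemma isEndpoint_and_eq_of_no_arrow (ht : Θ.IsSink t ∨ Θ.IsSource t) (hp : p ∈ t.1)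
    (h : ∀ a ∈ Θ.arrows, a.fst = p → ¬ (src a = t ∨ tgt a = t)) :
    Θ.IsEndpoint t ∧ ∀ x ∈ Θ.vertices, p ∈ x.1 → x = t := by
  refine ⟨?_, fun x hx hpx => ?_⟩ <;> by_contra hne
  · obtain ⟨a, ha, hap, hat⟩ := exists_arrow_of_not_isEndpoint ht hne hp
    exact h a ha hap hat
  · obtain ⟨a, ha, hap, hat⟩ :=
      exists_arrow_of_mem_of_mem (ht.elim And.left And.left) hx (Ne.symm hne) hp hpx
    exact h a ha hap hat

/- At the first vertex of the diagram on the cycle, one of the two arrows of the cycle is missing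
from the diagram. -/
variable (Θ) in
lemma exists_notMem_arrows (a : Γ.Arrow) : ∃ b, b.fst = a.fst ∧ b ∉ Θ.arrows := by
  classical
  by_contra! hall
  have hex : ∃ i, i < Θ.length ∧ (Θ.arrow i).fst = a.fst := by
    obtain ⟨i, hi, rfl⟩ := Θ.mem_arrows_iff.1 (hall a rfl)
    exact ⟨i, hi, rfl⟩
  obtain ⟨hi, hfst⟩ := Nat.find_spec hex
  have huniq {b : Γ.Arrow} (hb : b.fst = a.fst)
      (h : src b = Θ.vertex (Nat.find hex) ∨ tgt b = Θ.vertex (Nat.find hex)) :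
      b = Θ.arrow (Nat.find hex) := by
    obtain ⟨j, hj, rfl⟩ := Θ.mem_arrows_iff.1 (hall b hb)
    have hle := Nat.find_min' hex ⟨hj, hb⟩
    rcases eq_or_eq_of_src_or_tgt_eq_vertex hi.le hj h with h | h
    · rw [← h]
    · lia
  have hne := src_ne_tgt (Θ.arrow_mem_arrows hi)
  rcases src_arrow_or_tgt_arrow hi with h | h
  · have hprev := huniq (b := Γ.next.symm (Θ.arrow (Nat.find hex)))
      (by rw [← Γ.next_fst, Equiv.apply_symm_apply, hfst])
      (.inr (by rw [tgt, Equiv.apply_symm_apply, h]))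
    exact hne (by rw [tgt, ← (Equiv.symm_apply_eq _).1 hprev])
  · have hnext := huniq (b := Γ.next (Θ.arrow (Nat.find hex)))
      (by rw [Γ.next_fst, hfst]) (.inl h)
    exact hne (by rw [tgt, hnext])

end Tree

end Diagram

end BrauerTree

namespace BrauerTree

variable {V : Type v} {Γ : BrauerTree V} {K : Type u} [Field K]

namespace Diagram

variable {Θ : Γ.Diagram K} {a c d : Γ.Arrow} {k l : ℕ} {p : V} {x y t s : Γ.QVertex}

variable (Θ) in
/-- The `k` consecutive arrows of a cycle of the quiver starting with `c` all belong to the diagram.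
A directed path in a diagram never leaves a cycle, so it is given by such an arc. -/
def ContainsArc (c : Γ.Arrow) (k : ℕ) : Prop := ∀ j < k, (Γ.next ^ j) c ∈ Θ.arrows

lemma ContainsArc.src_mem_vertices (h : Θ.ContainsArc c k) (hk : 0 < k) {j : ℕ} (hj : j ≤ k) :
    src ((Γ.next ^ j) c) ∈ Θ.vertices := by
  cases j with
  | zero => exact Diagram.src_mem_vertices (h 0 hk)
  | succ j => exact tgt_next_pow c j ▸ tgt_mem_vertices (h j hj)

lemma containsArc_one (ha : a ∈ Θ.arrows) : Θ.ContainsArc a 1 := by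
  intro j hj
  rwa [Nat.lt_one_iff.1 hj]

lemma ContainsArc.succ (h : Θ.ContainsArc c k) (hk : (Γ.next ^ k) c ∈ Θ.arrows) :
    Θ.ContainsArc c (k + 1) := by
  intro j hj
  rcases Nat.lt_succ_iff_lt_or_eq.1 hj with hj | rfl
  exacts [h j hj, hk]

lemma ContainsArc.hasDirectedPath (h : Θ.ContainsArc c k) (hk : 0 < k) :
    Θ.HasDirectedPath (src c) (src ((Γ.next ^ k) c)) := by
  induction k, hk using Nat.le_induction with
  | base => exact .single ⟨c, h 0 one_pos, rfl, rfl⟩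
  | succ k _ ih =>
    exact .tail (ih fun j hj => h j (hj.trans k.lt_succ_self))
      ⟨_, h k k.lt_succ_self, rfl, tgt_next_pow c k⟩

lemma HasDirectedPath.exists_arc (h : Θ.HasDirectedPath x y) :
    ∃ (c : Γ.Arrow) (k : ℕ), 0 < k ∧ Θ.ContainsArc c k ∧ src c = x ∧
      src ((Γ.next ^ k) c) = y := by
  induction h with
  | single h =>
    obtain ⟨a, ha, rfl, rfl⟩ := h
    exact ⟨a, 1, one_pos, containsArc_one ha, rfl, rfl⟩
  | tail _ h ih =>
    obtain ⟨a, ha, hsrc, rfl⟩ := h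
    obtain ⟨c, _ | k, hk, hc, rfl, rfl⟩ := ih
    · exact absurd hk (lt_irrefl 0)
    · have hnext := next_eq_of_tgt_eq_src (hc k k.lt_succ_self) ha
        ((tgt_next_pow c k).trans hsrc.symm)
      rw [← Equiv.Perm.mul_apply, ← pow_succ'] at hnext
      exact ⟨c, k + 2, Nat.succ_pos _, hc.succ (hnext ▸ ha), rfl,
        by rw [← tgt_next_pow, hnext]⟩

lemma ContainsArc.le_of_isSink (h : Θ.ContainsArc c l) (hk : Θ.IsSink (src ((Γ.next ^ k) c))) :
    l ≤ k :=
  le_of_not_gt fun hkl => hk.2 _ (h k hkl) rfl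

lemma ContainsArc.le_of_isSource (h : Θ.ContainsArc d l) (hc : Θ.IsSource (src c))
    (hcd : (Γ.next ^ k) c = (Γ.next ^ l) d) : l ≤ k := by
  by_contra! hkl
  obtain ⟨m, rfl⟩ := Nat.exists_eq_add_of_lt hkl
  refine hc.2 _ (h m (by lia)) ?_
  rw [add_assoc, add_comm, next_pow_add_apply] at hcd
  rw [tgt_next_pow, (Γ.next ^ k).injective hcd]

section Finite

variable [Finite V]

lemma ContainsArc.lt_period (h : Θ.ContainsArc c k) : k < period c := by
  obtain ⟨b, hb, hbΘ⟩ := Θ.exists_notMem_arrows c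
  obtain ⟨j, hj, rfl⟩ := exists_next_pow_eq hb.symm
  exact (le_of_not_gt fun hjk => hbΘ (h j hjk)).trans_lt hj

lemma HasDirectedPath.ne (h : Θ.HasDirectedPath x y) : x ≠ y := by
  obtain ⟨c, k, hk, hc, rfl, rfl⟩ := h.exists_arc
  exact src_next_pow_ne hk hc.lt_period

lemma HasDirectedPath.exists_arc_of_mem (h : Θ.HasDirectedPath x y) (hpx : p ∈ x.1)
    (hpy : p ∈ y.1) : ∃ (c : Γ.Arrow) (k : ℕ), c.fst = p ∧ Θ.ContainsArc c k ∧ src c = x ∧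
      src ((Γ.next ^ k) c) = y := by
  have hxy := h.ne
  obtain ⟨c, k, -, hc, rfl, rfl⟩ := h.exists_arc
  exact ⟨c, k, eq_of_mem_mem hxy (fst_mem_src c) (fst_mem_src_next_pow c k) hpx hpy, hc, rfl, rfl⟩

lemma HasDirectedPath.sink_unique (h : Θ.HasDirectedPath x y) (h' : Θ.HasDirectedPath x t)
    (hy : Θ.IsSink y) (ht : Θ.IsSink t) (hpx : p ∈ x.1) (hpy : p ∈ y.1) (hpt : p ∈ t.1) :
    y = t := by
  obtain ⟨c, k, hcp, hc, rfl, rfl⟩ := h.exists_arc_of_mem hpx hpy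
  obtain ⟨d, l, rfl, hd, hdc, rfl⟩ := h'.exists_arc_of_mem hpx hpt
  obtain rfl := arrow_eq_of_fst_src hcp.symm hdc
  rw [(hc.le_of_isSink ht).antisymm (hd.le_of_isSink hy)]

lemma HasDirectedPath.source_unique (h : Θ.HasDirectedPath x y) (h' : Θ.HasDirectedPath s y)
    (hx : Θ.IsSource x) (hs : Θ.IsSource s) (hpx : p ∈ x.1) (hps : p ∈ s.1) (hpy : p ∈ y.1) :
    x = s := by
  obtain ⟨c, k, rfl, hc, rfl, rfl⟩ := h.exists_arc_of_mem hpx hpy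
  obtain ⟨d, l, hdp, hd, rfl, hdc⟩ := h'.exists_arc_of_mem hps hpy
  have heq : (Γ.next ^ k) c = (Γ.next ^ l) d :=
    arrow_eq_of_fst_src (by rw [next_pow_fst, next_pow_fst, hdp]) hdc.symm
  obtain rfl := (hd.le_of_isSource hx heq).antisymm (hc.le_of_isSource hs heq.symm)
  rw [(Γ.next ^ l).injective heq]

lemma exists_arc_to_sink (ha : a ∈ Θ.arrows) :
    ∃ k, 0 < k ∧ Θ.ContainsArc a k ∧ Θ.IsSink (src ((Γ.next ^ k) a)) := by
  classical
  have hex : ∃ k, (Γ.next ^ k) a ∉ Θ.arrows := by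
    obtain ⟨b, hb, hbΘ⟩ := Θ.exists_notMem_arrows a
    obtain ⟨k, -, rfl⟩ := exists_next_pow_eq hb.symm
    exact ⟨k, hbΘ⟩
  have harc : Θ.ContainsArc a (Nat.find hex) := fun j hj => not_not.1 (Nat.find_min hex hj)
  have hpos : 0 < Nat.find hex := (Nat.find_pos hex).2 fun h => h ha
  refine ⟨Nat.find hex, hpos, harc, harc.src_mem_vertices hpos le_rfl, fun b hb hsrc => ?_⟩
  obtain ⟨k, hk⟩ := Nat.exists_eq_add_one.2 hpos
  have hmem := harc k (hk ▸ k.lt_succ_self)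
  have hnext : Γ.next ((Γ.next ^ k) a) = b := by
    refine next_eq_of_tgt_eq_src hmem hb ?_
    rw [tgt_next_pow, hsrc, hk]
  rw [← Equiv.Perm.mul_apply, ← pow_succ', ← hk] at hnext
  exact Nat.find_spec hex (hnext ▸ hb)

lemma exists_arc_from_source (ha : a ∈ Θ.arrows) :
    ∃ c k, Θ.ContainsArc c (k + 1) ∧ (Γ.next ^ k) c = a ∧ Θ.IsSource (src c) := by
  classical
  have hex : ∃ k, ∃ b, b ∉ Θ.arrows ∧ (Γ.next ^ k) b = a := by
    obtain ⟨b, hb, hbΘ⟩ := Θ.exists_notMem_arrows a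
    obtain ⟨k, -, hk⟩ := exists_next_pow_eq hb
    exact ⟨k, b, hbΘ, hk⟩
  obtain ⟨b, hbΘ, hba⟩ := Nat.find_spec hex
  have hpos : 0 < Nat.find hex := by
    rw [Nat.find_pos]
    rintro ⟨d, hd, rfl⟩
    exact hd ha
  obtain ⟨k, hk⟩ := Nat.exists_eq_add_one.2 hpos
  have hnext (j : ℕ) : (Γ.next ^ j) (Γ.next b) = (Γ.next ^ (j + 1)) b := by
    rw [pow_succ, Equiv.Perm.mul_apply]
  have harc : Θ.ContainsArc (Γ.next b) (k + 1) := by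
    intro j hj
    by_contra hmem
    refine Nat.find_min hex (m := k - j) (by lia) ⟨_, hmem, ?_⟩
    rw [hnext, ← next_pow_add_apply, ← hba, hk]
    congr 2
    lia
  refine ⟨Γ.next b, k, harc, by rw [hnext, ← hk, hba],
    harc.src_mem_vertices k.succ_pos (Nat.zero_le _), fun d hd hdb => hbΘ ?_⟩
  have := next_eq_of_tgt_eq_src hd (harc 0 k.succ_pos) hdb
  rwa [← Γ.next.injective this]

end Finite

end Diagram

end BrauerTree

section IdempotentIdeals

variable {R : Type u} [Ring R]

/-- The left ideal `R e` of a ring `R`, as a module. -/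
noncomputable def leftIdealModule (e : R) : ModuleCat.{u} R :=
  ModuleCat.of R (Ideal.span {e} : Ideal R)

variable {e f g : R}

lemma mul_eq_of_mem_span_idempotent (he : IsIdempotentElem e) {m : R} (hm : m ∈ Ideal.span {e}) :
    m * e = m := by
  obtain ⟨r, rfl⟩ := Ideal.mem_span_singleton'.1 hm
  rw [mul_assoc, he.eq]

lemma projective_leftIdealModule (he : IsIdempotentElem e) :
    Projective (leftIdealModule e) := by
  let q : R →ₗ[R] (Ideal.span {e} : Ideal R) :=
    LinearMap.toSpanSingleton R _ ⟨e, Ideal.mem_span_singleton_self e⟩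
  suffices Module.Projective R (Ideal.span {e} : Ideal R) from
    (IsProjective.iff_projective _).1 this
  refine Module.Projective.of_split (Submodule.subtype _) q ?_
  exact LinearMap.ext fun m => Subtype.ext (mul_eq_of_mem_span_idempotent he m.2)

/-- The value at `e` of a homomorphism `R e ⟶ R f`. For idempotents `e` and `f` this identifies the
homomorphisms with `e R f`, where `z` corresponds to the multiplication by `z` from the right. -/
noncomputable def homVal : (leftIdealModule e ⟶ leftIdealModule f) →+ R where
  toFun φ := Subtype.val (p := (· ∈ (Ideal.span {f} : Ideal R)))
    (φ.hom ⟨e, Ideal.mem_span_singleton_self e⟩)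
  map_zero' := rfl
  map_add' _ _ := rfl

lemma hom_apply_eq_mul_homVal (he : IsIdempotentElem e)
    (φ : leftIdealModule e ⟶ leftIdealModule f) (m : (Ideal.span {e} : Ideal R)) :
    Subtype.val (p := (· ∈ (Ideal.span {f} : Ideal R))) (φ.hom m) = m * homVal φ := by
  have hm : m = m.1 • (⟨e, Ideal.mem_span_singleton_self e⟩ : (Ideal.span {e} : Ideal R)) :=
    Subtype.ext (mul_eq_of_mem_span_idempotent he m.2).symm
  conv_lhs => rw [hm]
  exact congrArg Subtype.val (map_smul φ.hom m.1 ⟨e, Ideal.mem_span_singleton_self e⟩)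

lemma mul_homVal_mul (he : IsIdempotentElem e) (hf : IsIdempotentElem f)
    (φ : leftIdealModule e ⟶ leftIdealModule f) : e * homVal φ * f = homVal φ := by
  rw [← hom_apply_eq_mul_homVal he φ ⟨e, Ideal.mem_span_singleton_self e⟩]
  exact mul_eq_of_mem_span_idempotent hf (Subtype.property _)

lemma homVal_comp (hf : IsIdempotentElem f) (φ : leftIdealModule e ⟶ leftIdealModule f)
    (ψ : leftIdealModule f ⟶ leftIdealModule g) : homVal (φ ≫ ψ) = homVal φ * homVal ψ :=
  hom_apply_eq_mul_homVal hf ψ _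

lemma homVal_eq_zero_iff (he : IsIdempotentElem e) {φ : leftIdealModule e ⟶ leftIdealModule f} :
    homVal φ = 0 ↔ φ = 0 := by
  refine ⟨fun h => ?_, fun h => by rw [h, map_zero]⟩
  ext m
  refine Subtype.ext ((hom_apply_eq_mul_homVal he φ m).trans ?_)
  rw [h, mul_zero]
  rfl

lemma exists_homVal_eq (he : IsIdempotentElem e) {z : R} (hz : e * z * f = z) :
    ∃ φ : leftIdealModule e ⟶ leftIdealModule f, homVal φ = z := by
  have hmem (m : R) : m * z ∈ (Ideal.span {f} : Ideal R) := by
    rw [← hz, ← mul_assoc]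
    exact Ideal.mul_mem_left _ _ (Ideal.mem_span_singleton_self f)
  let φ : (Ideal.span {e} : Ideal R) →ₗ[R] (Ideal.span {f} : Ideal R) :=
    ((LinearMap.toSpanSingleton R R z).codRestrict _ hmem).comp (Submodule.subtype _)
  refine ⟨ModuleCat.ofHom φ, ?_⟩
  change e * z = z
  rw [← hz, ← mul_assoc, ← mul_assoc, he.eq]

end IdempotentIdeals

section Biproducts

lemma projective_biproduct {C : Type*} [Category* C] [HasZeroMorphisms C] {I : Type*} {X : I → C}
    [HasBiproduct X] (hX : ∀ i, Projective (X i)) : Projective (⨁ X) where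
  factors f e _ := ⟨biproduct.desc fun i => Projective.factorThru (biproduct.ι X i ≫ f) e, by
    ext i
    simp⟩

variable {R : Type u} [Ring R] {I J L : Type*} [Finite I] [Finite J] [Finite L]
  {e : I → R} {f : J → R} {g : L → R}

/-- The matrix of a homomorphism between finite direct sums of left ideals generated by
idempotents; it acts on row vectors, so that composition becomes the matrix product. -/
noncomputable def homMatrix
    (φ : (⨁ fun i => leftIdealModule (e i)) ⟶ ⨁ fun j => leftIdealModule (f j)) : Matrix I J R :=
  fun i j => homVal (biproduct.ι (fun i => leftIdealModule (e i)) i ≫ φ ≫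
    biproduct.π (fun j => leftIdealModule (f j)) j)

lemma mul_homMatrix_mul (he : ∀ i, IsIdempotentElem (e i)) (hf : ∀ j, IsIdempotentElem (f j))
    (φ : (⨁ fun i => leftIdealModule (e i)) ⟶ ⨁ fun j => leftIdealModule (f j)) (i : I) (j : J) :
    e i * homMatrix φ i j * f j = homMatrix φ i j :=
  mul_homVal_mul (he i) (hf j) _

lemma homMatrix_comp [Fintype J] (hf : ∀ j, IsIdempotentElem (f j))
    (φ : (⨁ fun i => leftIdealModule (e i)) ⟶ ⨁ fun j => leftIdealModule (f j))
    (ψ : (⨁ fun j => leftIdealModule (f j)) ⟶ ⨁ fun l => leftIdealModule (g l)) :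
    homMatrix (φ ≫ ψ) = homMatrix φ * homMatrix ψ := by
  ext i l
  have htotal : ∑ j, biproduct.π (fun j => leftIdealModule (f j)) j ≫
      biproduct.ι (fun j => leftIdealModule (f j)) j = 𝟙 _ :=
    IsBilimit.total (biproduct.isBilimit _)
  simp only [Matrix.mul_apply, homMatrix, ← homVal_comp (hf _), ← map_sum]
  congr 1
  calc _ = biproduct.ι _ i ≫ φ ≫ 𝟙 _ ≫ ψ ≫ biproduct.π _ l := by
        rw [Category.id_comp, Category.assoc]
    _ = _ := by
        rw [← htotal]
        simp only [Preadditive.sum_comp, Preadditive.comp_sum, Category.assoc]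

lemma homMatrix_eq_zero_iff (he : ∀ i, IsIdempotentElem (e i))
    {φ : (⨁ fun i => leftIdealModule (e i)) ⟶ ⨁ fun j => leftIdealModule (f j)} :
    homMatrix φ = 0 ↔ φ = 0 := by
  constructor
  · intro h
    refine biproduct.hom_ext' _ _ fun i => biproduct.hom_ext _ _ fun j => ?_
    rw [Category.assoc, (homVal_eq_zero_iff (he i)).1 (congrFun₂ h i j), comp_zero, zero_comp]
  · rintro rfl
    ext i j
    rw [homMatrix, zero_comp, comp_zero, map_zero, Matrix.zero_apply]

lemma exists_homMatrix_eq (he : ∀ i, IsIdempotentElem (e i)) {M : Matrix I J R}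
    (hM : ∀ i j, e i * M i j * f j = M i j) :
    ∃ φ : (⨁ fun i => leftIdealModule (e i)) ⟶ ⨁ fun j => leftIdealModule (f j),
      homMatrix φ = M := by
  choose φ hφ using fun i j => exists_homVal_eq (he i) (hM i j)
  refine ⟨biproduct.desc fun i => biproduct.lift (φ i), ?_⟩
  ext i j
  rw [homMatrix, biproduct.ι_desc_assoc, biproduct.lift_π, hφ]

end Biproducts

namespace BrauerTree

variable {V : Type v} [Finite V] {Γ : BrauerTree V} {K : Type u} [Field K]

namespace Diagram

open Matrix

variable {Θ Θ' : Γ.Diagram K} {a : Γ.Arrow} {p : V} {y : Γ.QVertex} {z : Γ.Alg K}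
  {D : Matrix {x // Θ.IsSource x} {x // Θ.IsSink x} (Γ.Alg K)}
  {D' : Matrix {x // Θ'.IsSource x} {x // Θ'.IsSink x} (Γ.Alg K)}

variable (Θ) in
/-- `D` is the matrix of the differential of a two-term complex with diagram `Θ`, where a
homomorphism `A e_i ⟶ A e_j` is identified with an element of `e_i A e_j`. -/
structure IsDifferential (D : Matrix {x // Θ.IsSource x} {x // Θ.IsSink x} (Γ.Alg K)) : Prop where
  mem_peirce : ∀ i j, D i j ∈ peirce K i.1 j.1
  ne_zero_iff : ∀ i j, D i j ≠ 0 ↔ Θ.HasDirectedPath i.1 j.1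

namespace IsDifferential

lemma mulVec_apply_eq [Fintype {x // Θ.IsSink x}] (hD : Θ.IsDifferential D)
    {g : {x // Θ.IsSink x} → Γ.Alg K} (hg : ∀ t, g t ∈ peirce K t.1 y) (hy : y ∉ Θ.vertices)
    {s : {x // Θ.IsSource x}} {t : {x // Θ.IsSink x}} (hst : Θ.HasDirectedPath s.1 t.1)
    (hps : p ∈ s.1.1) (hpt : p ∈ t.1.1) (hpy : p ∈ y.1) : (D *ᵥ g) s = D s t * g t := by
  refine Finset.sum_eq_single t (fun t' _ ht' => ?_) (by simp)
  by_contra h0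
  have hst' := (hD.ne_zero_iff s t').1 (left_ne_zero_of_mul h0)
  obtain ⟨q, hqs, hqt', hqy⟩ := exists_mem_of_mul_ne_zero hst'.ne
    (ne_of_mem_of_not_mem t'.2.1 hy) (hD.mem_peirce s t') (hg t') h0
  obtain rfl := eq_of_mem_mem (ne_of_mem_of_not_mem s.2.1 hy) hqs hqy hps hpy
  exact ht' (Subtype.ext (hst'.sink_unique hst t'.2 t.2 hqs hqt' hpt))

lemma vecMul_apply_eq [Fintype {x // Θ.IsSource x}] (hD : Θ.IsDifferential D)
    {g : {x // Θ.IsSource x} → Γ.Alg K} (hg : ∀ s, g s ∈ peirce K y s.1) (hy : y ∉ Θ.vertices)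
    {s : {x // Θ.IsSource x}} {t : {x // Θ.IsSink x}} (hst : Θ.HasDirectedPath s.1 t.1)
    (hps : p ∈ s.1.1) (hpt : p ∈ t.1.1) (hpy : p ∈ y.1) : (g ᵥ* D) t = g s * D s t := by
  refine Finset.sum_eq_single s (fun s' _ hs' => ?_) (by simp)
  by_contra h0
  have hst' := (hD.ne_zero_iff s' t).1 (right_ne_zero_of_mul h0)
  obtain ⟨q, hqy, hqs', hqt⟩ := exists_mem_of_mul_ne_zero (ne_of_mem_of_not_mem s'.2.1 hy).symm
    hst'.ne (hg s') (hD.mem_peirce s' t) h0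
  obtain rfl := eq_of_mem_mem (ne_of_mem_of_not_mem t.2.1 hy) hqt hqy hpt hpy
  exact hs' (Subtype.ext (hst'.source_unique hst s'.2 s.2 hqs' hps hpt))

/- An arrow at `p` ending at the sink `t` is the last one of an arc of the diagram from a source `s`
to `t`. Continued to `y`, this arc is still shorter than the cycle at `p`, so `D s t * g t ≠ 0`. -/
lemma tgt_ne_of_mulVec_eq_zero [Fintype {x // Θ.IsSink x}] (hD : Θ.IsDifferential D)
    {g : {x // Θ.IsSink x} → Γ.Alg K} (hg : ∀ t, g t ∈ peirce K t.1 y) (hy : y ∉ Θ.vertices)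
    (hDg : D *ᵥ g = 0) {t : {x // Θ.IsSink x}} (ht : g t ≠ 0) (hpy : p ∈ y.1)
    (ha : a ∈ Θ.arrows) (hap : a.fst = p) : tgt a ≠ t.1 := by
  intro hat
  obtain ⟨c, k, hc, rfl, hs⟩ := exists_arc_from_source ha
  obtain ⟨t, htsink⟩ := t
  obtain rfl : src ((Γ.next ^ (k + 1)) c) = t := (tgt_next_pow c k).symm.trans hat
  obtain rfl : c.fst = p := (next_pow_fst c k).symm.trans hap
  obtain ⟨b, hb, rfl⟩ := exists_src_eq hpy
  obtain ⟨n, hn, rfl⟩ := exists_next_pow_eq hb.symm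
  have hkn : k + 1 < n := lt_of_not_ge fun h => hy (hc.src_mem_vertices k.succ_pos h)
  obtain ⟨l, rfl⟩ := Nat.exists_eq_add_of_le hkn.le
  have hdir := hc.hasDirectedPath k.succ_pos
  have happly := hD.mulVec_apply_eq hg hy (s := ⟨src c, hs⟩) (t := ⟨_, htsink⟩) hdir
    (fst_mem_src c) (fst_mem_src_next_pow c (k + 1)) hpy
  rw [hDg] at happly
  exact mul_ne_zero_of_mem_peirce k.succ_pos (by lia) hn (hD.mem_peirce ⟨_, hs⟩ ⟨_, htsink⟩)
    (hg ⟨_, htsink⟩) ((hD.ne_zero_iff _ _).2 hdir) ht happly.symm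

lemma src_ne_of_vecMul_eq_zero [Fintype {x // Θ.IsSource x}] (hD : Θ.IsDifferential D)
    {g : {x // Θ.IsSource x} → Γ.Alg K} (hg : ∀ s, g s ∈ peirce K y s.1) (hy : y ∉ Θ.vertices)
    (hgD : g ᵥ* D = 0) {s : {x // Θ.IsSource x}} (hs : g s ≠ 0) (hpy : p ∈ y.1)
    (ha : a ∈ Θ.arrows) (hap : a.fst = p) : src a ≠ s.1 := by
  intro has
  obtain ⟨l, hl, hc, ht⟩ := exists_arc_to_sink ha
  obtain ⟨s, hssource⟩ := s
  obtain rfl : src a = s := has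
  obtain ⟨b, rfl, rfl⟩ := exists_src_eq hpy
  obtain ⟨k, hk, rfl⟩ := exists_next_pow_eq hap.symm
  have hk0 : 0 < k := Nat.pos_of_ne_zero fun h => hy (by simpa [h] using hssource.1)
  have hkl : k + l < period b := by
    by_contra! hle
    refine hy ?_
    rw [← next_pow_period b, ← Nat.add_sub_cancel' hk.le, next_pow_add_apply]
    exact hc.src_mem_vertices hl (by lia)
  rw [← next_pow_add_apply] at ht
  have hdir := hc.hasDirectedPath hl
  rw [← next_pow_add_apply] at hdir
  have happly := hD.vecMul_apply_eq hg hy (s := ⟨_, hssource⟩) (t := ⟨_, ht⟩) hdir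
    (fst_mem_src_next_pow b k) (fst_mem_src_next_pow b (k + l)) (fst_mem_src b)
  rw [hgD] at happly
  exact mul_ne_zero_of_mem_peirce hk0 hl hkl (hg ⟨_, hssource⟩)
    (hD.mem_peirce ⟨_, hssource⟩ ⟨_, ht⟩) hs ((hD.ne_zero_iff _ _).2 hdir) happly.symm

lemma apply_mul_eq_zero_of_unique_vertex (hD : Θ.IsDifferential D) {t : {x // Θ.IsSink x}}
    (hpt : p ∈ t.1.1) (ht : ∀ x ∈ Θ.vertices, p ∈ x.1 → x = t.1) (hpy : p ∈ y.1)
    (hty : t.1 ≠ y) (hz : z ∈ peirce K t.1 y) (s : {x // Θ.IsSource x}) : D s t * z = 0 := by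
  by_contra h0
  have hst := (hD.ne_zero_iff s t).1 (left_ne_zero_of_mul h0)
  obtain ⟨q, hqs, hqt, hqy⟩ := exists_mem_of_mul_ne_zero hst.ne hty (hD.mem_peirce s t) hz h0
  obtain rfl := eq_of_mem_mem hty hqt hqy hpt hpy
  exact hst.ne (ht _ s.2.1 hqs)

lemma mul_apply_eq_zero_of_unique_vertex (hD : Θ.IsDifferential D) {s : {x // Θ.IsSource x}}
    (hps : p ∈ s.1.1) (hs : ∀ x ∈ Θ.vertices, p ∈ x.1 → x = s.1) (hpy : p ∈ y.1)
    (hys : y ≠ s.1) (hz : z ∈ peirce K y s.1) (t : {x // Θ.IsSink x}) : z * D s t = 0 := by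
  by_contra h0
  have hst := (hD.ne_zero_iff s t).1 (right_ne_zero_of_mul h0)
  obtain ⟨q, hqy, hqs, hqt⟩ := exists_mem_of_mul_ne_zero hys hst.ne hz (hD.mem_peirce s t) h0
  obtain rfl := eq_of_mem_mem hys hqy hqs hpy hps
  exact hst.ne (hs _ t.2.1 hqt).symm

end IsDifferential

section DisjointDiagrams

variable [Fintype {x // Θ.IsSink x}] [Fintype {x // Θ'.IsSource x}] {c : List Γ.Arrow}

lemma sinkSourceOn_of_mul_eq_zero (hdisj : ∀ x ∈ Θ.vertices, x ∉ Θ'.vertices)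
    (hc : Γ.IsACycle K c) (hD : Θ.IsDifferential D) (hD' : Θ'.IsDifferential D')
    {G : Matrix {x // Θ.IsSink x} {x // Θ'.IsSource x} (Γ.Alg K)}
    (hG : ∀ t s, G t s ∈ peirce K t.1 s.1) (hDG : D * G = 0) (hGD' : G * D' = 0) (hG0 : G ≠ 0)
    (h : ∃ x ∈ Θ.vertices, OnCycle c x) (h' : ∃ x ∈ Θ'.vertices, OnCycle c x) :
    Θ.SinkSourceOn Θ' c := by
  obtain ⟨t, s, hts⟩ : ∃ t s, G t s ≠ 0 := by
    by_contra! h0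
    exact hG0 (Matrix.ext h0)
  obtain ⟨p, hpt, hps⟩ := exists_mem_of_mem_peirce (hG t s) hts
  have hcycle (x : Γ.QVertex) : OnCycle c x ↔ p ∈ x.1 := by
    obtain ⟨x, hx, a, ha, hax⟩ := h
    obtain ⟨y, hy, hcy⟩ := h'
    have hcx : OnCycle c x := ⟨a, ha, hax⟩
    rw [hc.onCycle_iff ha] at hcx hcy ⊢
    rw [eq_of_disjoint hdisj t.2.1 hx s.2.1 hy hpt hcx hps hcy]
  have htend := isEndpoint_and_eq_of_no_arrow (.inl t.2) hpt fun a ha hap => not_or.2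
    ⟨t.2.2 a ha, hD.tgt_ne_of_mulVec_eq_zero (fun t => hG t s) (fun hs => hdisj _ hs s.2.1)
      (funext fun i => congrFun₂ hDG i s) hts hps ha hap⟩
  have hsend := isEndpoint_and_eq_of_no_arrow (.inr s.2) hps fun a ha hap => not_or.2
    ⟨hD'.src_ne_of_vecMul_eq_zero (hG t) (hdisj _ t.2.1)
      (funext fun j => congrFun₂ hGD' t j) hts hpt ha hap, s.2.2 a ha⟩
  simp only [SinkSourceOn, hcycle]
  exact ⟨s, t, ⟨s.2, hsend.1⟩, hps, ⟨t.2, htend.1⟩, hpt, hsend.2, htend.2⟩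

lemma SinkSourceOn.exists_mul_eq_zero (h : Θ.SinkSourceOn Θ' c)
    (hdisj : ∀ x ∈ Θ.vertices, x ∉ Θ'.vertices) (hc : Γ.IsACycle K c) (hD : Θ.IsDifferential D)
    (hD' : Θ'.IsDifferential D') :
    ∃ G : Matrix {x // Θ.IsSink x} {x // Θ'.IsSource x} (Γ.Alg K),
      (∀ t s, G t s ∈ peirce K t.1 s.1) ∧ D * G = 0 ∧ G * D' = 0 ∧ G ≠ 0 := by
  classical
  obtain ⟨s, t, ⟨hs, -⟩, hcs, ⟨ht, -⟩, hct, hs', ht'⟩ := h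
  obtain ⟨a, ha, has⟩ := hcs
  have hcs : OnCycle c s := ⟨a, ha, has⟩
  simp only [hc.onCycle_iff ha] at hcs hct hs' ht'
  have hts : t ≠ s := ne_of_mem_of_not_mem ht.1 fun h => hdisj _ h hs.1
  lift t to {x // Θ.IsSink x} using ht
  lift s to {x // Θ'.IsSource x} using hs
  obtain ⟨b, k, -, -, hk, htb, hsb⟩ := exists_arc hts hct hcs
  have hmem : path K b k ∈ peirce K t.1 s.1 := htb ▸ hsb ▸ path_mem_peirce b k
  refine ⟨single t s (path K b k), fun i j => ?_, ?_, ?_, fun h => ?_⟩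
  · rw [single_apply]
    split_ifs with hij
    · obtain ⟨rfl, rfl⟩ := hij
      exact hmem
    · exact Submodule.zero_mem _
  · ext i j
    by_cases hj : j = s
    · rw [hj, mul_single_apply_same]
      exact hD.apply_mul_eq_zero_of_unique_vertex hct ht' hcs hts hmem i
    · rw [mul_single_apply_of_ne _ _ _ _ _ hj, Matrix.zero_apply]
  · ext i j
    by_cases hi : i = t
    · rw [hi, single_mul_apply_same]
      exact hD'.mul_apply_eq_zero_of_unique_vertex hcs hs' hct hts hmem j
    · rw [single_mul_apply_of_ne _ _ _ _ _ hi, Matrix.zero_apply]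
  · exact path_ne_zero hk (by simpa using congrFun₂ h t s)

end DisjointDiagrams

end Diagram

end BrauerTree

namespace BrauerTree

variable {V : Type v} {Γ : BrauerTree V} {K : Type u} [Field K]

namespace Diagram

variable {Θ Θ' : Γ.Diagram K} {T T' : CochainComplex (ModuleCat.{max u v} (Γ.Alg K)) ℤ}

namespace IsDiagramOf

lemma exists_isDifferential (h : Θ.IsDiagramOf T) :
    ∃ (φ₀ : T.X 0 ≅ ⨁ fun i : {x // Θ.IsSource x} => leftIdealModule (Γ.idem K i.1))
      (φ₁ : T.X 1 ≅ ⨁ fun j : {x // Θ.IsSink x} => leftIdealModule (Γ.idem K j.1)),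
      Θ.IsDifferential (homMatrix (φ₀.inv ≫ T.d 0 1 ≫ φ₁.hom)) := by
  obtain ⟨φ₀, φ₁, h⟩ := h
  refine ⟨φ₀, φ₁, fun i j => mem_peirce_iff.2 ?_, fun i j => ?_⟩
  · exact mul_homMatrix_mul (fun _ => idem_mul_self _) (fun _ => idem_mul_self _)
      _ i j
  · rw [← h i j, homMatrix, Ne, homVal_eq_zero_iff (idem_mul_self _)]
    simp only [Category.assoc]
    rfl

lemma projective (h : Θ.IsDiagramOf T) (hT : ∀ n : ℤ, n ≠ 0 → n ≠ 1 → IsZero (T.X n)) (n : ℤ) :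
    Projective (T.X n) := by
  obtain ⟨φ₀, φ₁, -⟩ := h.exists_isDifferential
  have hproj (x : Γ.QVertex) : Projective (leftIdealModule (Γ.idem K x)) :=
    projective_leftIdealModule (idem_mul_self x)
  by_cases h0 : n = 0
  · subst h0
    exact Projective.of_iso φ₀.symm (projective_biproduct fun _ => hproj _)
  by_cases h1 : n = 1
  · subst h1
    exact Projective.of_iso φ₁.symm (projective_biproduct fun _ => hproj _)
  · exact (hT n h0 h1).projective

variable [Finite V]

lemma sinkSourceOn_iff (h : Θ.IsDiagramOf T) (h' : Θ'.IsDiagramOf T')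
    (hdisj : ∀ x ∈ Θ.vertices, x ∉ Θ'.vertices) {c : List Γ.Arrow} (hc : Γ.IsACycle K c)
    (hΘ : ∃ x ∈ Θ.vertices, OnCycle c x) (hΘ' : ∃ x ∈ Θ'.vertices, OnCycle c x) :
    Θ.SinkSourceOn Θ' c ↔
      ∃ g : T.X 1 ⟶ T'.X 0, T.d 0 1 ≫ g = 0 ∧ g ≫ T'.d 0 1 = 0 ∧ g ≠ 0 := by
  have := Fintype.ofFinite {x // Θ.IsSink x}
  have := Fintype.ofFinite {x // Θ'.IsSource x}
  obtain ⟨φ₀, φ₁, hD⟩ := h.exists_isDifferential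
  obtain ⟨ψ₀, ψ₁, hD'⟩ := h'.exists_isDifferential
  have hidem {p : Γ.QVertex → Prop} (x : {x // p x}) : IsIdempotentElem (Γ.idem K x.1) :=
    idem_mul_self x.1
  let M (g : T.X 1 ⟶ T'.X 0) := homMatrix (φ₁.inv ≫ g ≫ ψ₀.hom)
  have hzero (g) : M g = 0 ↔ g = 0 := by
    rw [homMatrix_eq_zero_iff hidem, ← cancel_epi φ₁.inv, ← cancel_mono ψ₀.hom]
    simp
  have hleft (g) : homMatrix (φ₀.inv ≫ T.d 0 1 ≫ φ₁.hom) * M g = 0 ↔ T.d 0 1 ≫ g = 0 := by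
    rw [← homMatrix_comp hidem, homMatrix_eq_zero_iff hidem, ← cancel_epi φ₀.inv,
      ← cancel_mono ψ₀.hom]
    simp
  have hright (g) : M g * homMatrix (ψ₀.inv ≫ T'.d 0 1 ≫ ψ₁.hom) = 0 ↔ g ≫ T'.d 0 1 = 0 := by
    rw [← homMatrix_comp hidem, homMatrix_eq_zero_iff hidem, ← cancel_epi φ₁.inv,
      ← cancel_mono ψ₁.hom]
    simp
  constructor
  · intro hss
    obtain ⟨G, hG, hDG, hGD', hG0⟩ := hss.exists_mul_eq_zero hdisj hc hD hD'
    obtain ⟨γ, rfl⟩ := exists_homMatrix_eq hidem fun t s => mem_peirce_iff.1 (hG t s)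
    have hγ : homMatrix γ = M (φ₁.hom ≫ γ ≫ ψ₀.inv) := by simp [M]
    rw [hγ] at hDG hGD' hG0
    exact ⟨_, (hleft _).1 hDG, (hright _).1 hGD', (hzero _).not.1 hG0⟩
  · rintro ⟨g, hdg, hgd, hg⟩
    exact sinkSourceOn_of_mul_eq_zero hdisj hc hD hD'
      (fun t s => mem_peirce_iff.2 (mul_homMatrix_mul hidem hidem _ t s)) ((hleft g).2 hdg)
      ((hright g).2 hgd) ((hzero g).not.2 hg) hΘ hΘ'

lemma derivedHomVanishes_neg_one_iff [HasDerivedCategory.{w} (ModuleCat.{max u v} (Γ.Alg K))]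
    (h : Θ.IsDiagramOf T) (h' : Θ'.IsDiagramOf T')
    (hT : ∀ n : ℤ, n ≠ 0 → n ≠ 1 → IsZero (T.X n)) (hT' : ∀ n : ℤ, n ≠ 0 → n ≠ 1 → IsZero (T'.X n))
    (hdisj : ∀ x ∈ Θ.vertices, x ∉ Θ'.vertices) {c : List Γ.Arrow} (hc : Γ.IsACycle K c)
    (hΘ : ∃ x ∈ Θ.vertices, OnCycle c x) (hΘ' : ∃ x ∈ Θ'.vertices, OnCycle c x) :
    DerivedHomVanishes T T' (-1) ↔ ¬ Θ.SinkSourceOn Θ' c := by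
  have hproj := h.projective hT
  have : T.IsStrictlyLE 1 := (T.isStrictlyLE_iff 1).2 fun n hn => hT n (by lia) (by lia)
  have : T'.IsStrictlyGE 0 := (T'.isStrictlyGE_iff 0).2 fun n hn => hT' n (by lia) (by lia)
  rw [_root_.derivedHomVanishes_neg_one_iff, h.sinkSourceOn_iff h' hdisj hc hΘ hΘ']
  push Not
  rfl

end IsDiagramOf

end Diagram

end BrauerTree

theorem hom_vanishes_of_common_cycle_no_intersection_general
    {K : Type u} [Field K] {V : Type v} [Finite V] (Γ : BrauerTree V)
    [HasDerivedCategory.{w} (ModuleCat.{max u v} (Γ.Alg K))]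
    (Ti Tj : CochainComplex (ModuleCat.{max u v} (Γ.Alg K)) ℤ)
    (hTi : ∀ n : ℤ, n ≠ 0 → n ≠ 1 → IsZero (Ti.X n))
    (hTj : ∀ n : ℤ, n ≠ 0 → n ≠ 1 → IsZero (Tj.X n))
    (Θi Θj : Γ.Diagram K) (hΘi : Θi.IsDiagramOf Ti) (hΘj : Θj.IsDiagramOf Tj)
    (Υ : List Γ.Arrow) (hΥ : Γ.IsACycle K Υ)
    (hΥi : ∃ x ∈ Θi.vertices, BrauerTree.OnCycle Υ x)
    (hΥj : ∃ x ∈ Θj.vertices, BrauerTree.OnCycle Υ x)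
    (hdisj : ∀ x ∈ Θi.vertices, x ∉ Θj.vertices) :
    (DerivedHomVanishes Ti Tj (-1) ∧ DerivedHomVanishes Tj Ti (-1)) ↔
      ¬ (Θi.SinkSourceOn Θj Υ ∨ Θj.SinkSourceOn Θi Υ) := by
  have hdisj' : ∀ x ∈ Θj.vertices, x ∉ Θi.vertices := fun x hj hi => hdisj x hi hj
  rw [hΘi.derivedHomVanishes_neg_one_iff hΘj hTi hTj hdisj hΥ hΥi hΥj,
    hΘj.derivedHomVanishes_neg_one_iff hΘi hTj hTi hdisj' hΥ hΥj hΥi, not_or]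

theorem hom_vanishes_of_common_cycle_no_intersection
    {K : Type u} [Field K] [IsAlgClosed K] {V : Type v} [Finite V] (Γ : BrauerTree V)
    [HasDerivedCategory.{w} (ModuleCat.{max u v} (Γ.Alg K))]
    (Ti Tj : CochainComplex (ModuleCat.{max u v} (Γ.Alg K)) ℤ)
    (hTi : IsIndecTwoTermPartialTilting Ti) (hTj : IsIndecTwoTermPartialTilting Tj)
    (hPi : IsPresentationOfModule Ti) (hPj : IsPresentationOfModule Tj)
    (Θi Θj : Γ.Diagram K) (hΘi : Θi.IsDiagramOf Ti) (hΘj : Θj.IsDiagramOf Tj)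
    (Υ : List Γ.Arrow) (hΥ : Γ.IsACycle K Υ)
    (hΥi : ∃ x ∈ Θi.vertices, BrauerTree.OnCycle Υ x)
    (hΥj : ∃ x ∈ Θj.vertices, BrauerTree.OnCycle Υ x)
    (hdisj : ∀ x ∈ Θi.vertices, x ∉ Θj.vertices) :
    (DerivedHomVanishes Ti Tj (-1) ∧ DerivedHomVanishes Tj Ti (-1)) ↔
      ¬ (Θi.SinkSourceOn Θj Υ ∨ Θj.SinkSourceOn Θi Υ) :=
  hom_vanishes_of_common_cycle_no_intersection_general Γ Ti Tj hTi.twoTerm hTj.twoTerm Θi Θj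
    hΘi hΘj Υ hΥ hΥi hΥj hdisj
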